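/- arXiv:2301.00085 — 5 statements merged into one kernel-verified Lean document; each statement's English description precedes it below -/
import Mathlib

section
/- Fix integers r ≥ 3 and d ≥ 2, and a real number 0 < c < (r−1)/r. Let z₂ be the unique positive real number satisfying z₂((z₂+1)^{r−1} − z₂^{r−1})/((z₂+1)^r − z₂^r) = c, and let z₁ := d/(r((z₂+1)^r − z₂^r)). Let h(x) := x log x. If h(d/r) + h(dc) + h(d(1−c)) − h(c) − h(1−c) − h(d) − (d/r) log z₁ − dc log z₂ < 0, then with high probability α(H_r(n,d)) < cn. -/
/-!
The theorem is a first moment bound in the configuration model. A configuration is an array of `m`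
rows of length `r` (with `m * r = d * n`) in which every vertex occurs exactly `d` times; a simple
one (rows without repetition, distinct rows distinct as sets) lists the edges of a `d`-regular
`r`-uniform hypergraph, and every hypergraph has the same number `m! * (r!) ^ m` of listings
(`card_listings`).

*Independent sets among all configurations.* For a vertex set `S` of size `s`, the set of positions
holding a vertex of `S` is, by symmetry, uniform among the sets of `d * s` positions
(`card_filter_pattern`), and `S` is independent when that set contains no full row. The number of
such position sets is a coefficient of `((1 + z) ^ r - z ^ r) ^ m`, hence at most
`((1 + z) ^ r - z ^ r) ^ m / z ^ (d * s)` for every `z > 0` (`card_noFull_le`); here `z = z₂`.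

*Simple configurations are not rare.* The number of configurations is at most a polynomial in `n`
times the number of simple ones (`card_configs_le`). A switching estimate shows that the expected
number of defects (repetitions in a row, duplicated rows) is bounded, so by Markov's inequality half
of the configurations have a bounded number of defects. Exchanging an entry of a defective row with
an entry of a row far away removes a defect without creating one (`exists_improving_swap`), so
boundedly many exchanges lead to a simple configuration.

*Asymptotics.* Altogether the probability of an independent set of size `s` is at most
`poly(n) * C(n, s) / C(d n, d s) * Q ^ m / z ^ (d * s)` with `Q = (1 + z) ^ r - z ^ r`. Since
`C(n, s) ^ d ≤ C(d n, d s)`, only a lower bound for `C(n, s)` is needed; it is sharp up to a factor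
`n + 1` when `s` is the mode of the binomial distribution with parameters `n`, `c`, which is within
`1` of `c * n` and never exceeds `⌈c * n⌉`. The resulting exponential rate is the expression assumed
to be negative.
-/

open Finset Filter Real

open scoped Classical

/-- A set of vertices is independent if it contains no edge. -/
def IndepSet {n : ℕ} (E : Finset (Finset (Fin n))) (S : Finset (Fin n)) : Prop :=
  ∀ e ∈ E, ¬ e ⊆ S

/-- The independence number of the hypergraph with edge set `E`. -/
noncomputable def independenceNumber {n : ℕ} (E : Finset (Finset (Fin n))) : ℕ :=
  sSup {s : ℕ | ∃ S : Finset (Fin n), S.card = s ∧ IndepSet E S}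

/-- The family of all `d`-regular `r`-uniform hypergraphs on vertex set `Fin n`. -/
noncomputable def regularFamily (n r d : ℕ) : Finset (Finset (Finset (Fin n))) :=
  Finset.univ.filter (fun E : Finset (Finset (Fin n)) =>
    (∀ e ∈ E, e.card = r) ∧ ∀ v : Fin n, (E.filter (fun e => v ∈ e)).card = d)

/-- The probability that a uniformly random element of `family` satisfies `P`. -/
noncomputable def uniformProb {α : Type*} (family : Finset α) (P : α → Prop) : ℝ :=
  ((family.filter (fun x => P x)).card : ℝ) / (family.card : ℝ)

/-! ### Configurations and switching estimates -/

/-- The assignments of vertices to the `m * r` positions (`m` rows of length `r`) in which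
every vertex is used exactly `d` times: the configuration model, with the `d` copies of each
vertex identified. -/
noncomputable def configs (m r n d : ℕ) : Finset (Fin m × Fin r → Fin n) :=
  univ.filter (fun f => ∀ v, (univ.filter (fun p => f p = v)).card = d)

/-- The set of vertices occurring in row `i`. -/
noncomputable def row {m r n : ℕ} (f : Fin m × Fin r → Fin n) (i : Fin m) : Finset (Fin n) :=
  univ.image (fun a => f (i, a))

/-- Pairs of distinct positions of a common row holding the same vertex. -/
noncomputable def loops {m r n : ℕ} (f : Fin m × Fin r → Fin n) :
    Finset ((Fin m × Fin r) × (Fin m × Fin r)) :=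
  univ.filter (fun x => x.1.1 = x.2.1 ∧ x.1 ≠ x.2 ∧ f x.1 = f x.2)

/-- Pairs of distinct rows with the same vertex set, the first of which has no repetition. -/
noncomputable def dups {m r n : ℕ} (f : Fin m × Fin r → Fin n) : Finset (Fin m × Fin m) :=
  univ.filter (fun x => x.1 ≠ x.2 ∧ Function.Injective (fun a => f (x.1, a)) ∧
    row f x.1 = row f x.2)

/-- The number of obstructions to `f` being a listing of the edges of a hypergraph. -/
noncomputable def defects {m r n : ℕ} (f : Fin m × Fin r → Fin n) : ℕ :=
  (loops f).card + (dups f).card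

lemma mem_configs {m r n d : ℕ} {f : Fin m × Fin r → Fin n} :
    f ∈ configs m r n d ↔ ∀ v, (univ.filter (fun p => f p = v)).card = d := by
  simp [configs]

lemma mem_row {m r n : ℕ} {f : Fin m × Fin r → Fin n} {i : Fin m} {v : Fin n} :
    v ∈ row f i ↔ ∃ a, f (i, a) = v := by
  simp [row]

lemma comp_mem_configs {m r n d : ℕ} {f : Fin m × Fin r → Fin n}
    (hf : f ∈ configs m r n d) (σ : Equiv.Perm (Fin m × Fin r)) :
    f ∘ σ ∈ configs m r n d := by
  rw [mem_configs] at hf ⊢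
  intro v
  rw [← hf v]
  refine Finset.card_bij (fun p _ => σ p) ?_ ?_ ?_
  · intro p hp; simpa using hp
  · intro p _ q _ h; exact σ.injective h
  · intro q hq; exact ⟨σ.symm q, by simpa using hq, by simp⟩

/-- Switching estimate for one coincidence `f p = f q`: exchanging the entries at `q` and at
`x ∈ X` sends such an `f` into `F`, and the result `g` determines `x` up to `d` choices, because
`g x = g p`. -/
lemma switch_count {m r n d : ℕ} (F : Finset (Fin m × Fin r → Fin n))
    (hF : F ⊆ configs m r n d) (p q : Fin m × Fin r) (hpq : p ≠ q) (X : Finset (Fin m × Fin r))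
    (hX : ∀ f ∈ F, ∀ x ∈ X, f ∘ Equiv.swap q x ∈ F) :
    X.card * (F.filter (fun f => f p = f q)).card ≤ d * F.card := by
  rw [mul_comm X.card, ← Finset.card_product]
  refine Finset.card_le_mul_card_image_of_maps_to
    (f := fun y : (Fin m × Fin r → Fin n) × (Fin m × Fin r) => y.1 ∘ Equiv.swap q y.2) ?_ d ?_
  · rintro ⟨f, x⟩ hy
    simp only [Finset.mem_product, Finset.mem_filter] at hy
    exact hX f hy.1.1 x hy.2
  · intro g hg
    rw [← mem_configs.1 (hF hg) (g p)]
    refine Finset.card_le_card_of_injOn (fun y => y.2) ?_ ?_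
    · rintro ⟨f, x⟩ hy
      simp only [Finset.coe_filter, Finset.mem_product, Finset.mem_filter, Set.mem_ofPred_eq] at hy
      obtain ⟨⟨⟨-, hf⟩, -⟩, rfl⟩ := hy
      by_cases hx : p = x
      · simp [hx]
      · simp [Equiv.swap_apply_of_ne_of_ne hpq hx, hf]
    · rintro ⟨f, x⟩ hy ⟨f', x'⟩ hy' h
      simp only [Finset.coe_filter, Finset.mem_product, Finset.mem_filter, Set.mem_ofPred_eq] at hy hy'
      obtain rfl : x = x' := h
      have h1 : f ∘ Equiv.swap q x = f' ∘ Equiv.swap q x := hy.2.trans hy'.2.symm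
      have h2 : f = f' := (Equiv.swap q x).surjective.injective_comp_right h1
      rw [h2]

lemma count_one {m r n d : ℕ} (p q : Fin m × Fin r) (hpq : p ≠ q) :
    (m * r) * ((configs m r n d).filter (fun f => f p = f q)).card
      ≤ d * (configs m r n d).card := by
  have := switch_count (configs m r n d) (Finset.Subset.refl _) p q hpq univ
    (fun f hf x _ => comp_mem_configs hf _)
  simpa using this

lemma count_two {m r n d : ℕ} (p q p' q' : Fin m × Fin r) (hpq : p ≠ q) (hpq' : p' ≠ q')
    (h1 : q ≠ p') (h2 : q ≠ q') :
    (m * r) * ((m * r - 2) *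
      ((configs m r n d).filter (fun f => f p' = f q' ∧ f p = f q)).card)
      ≤ d * (d * (configs m r n d).card) := by
  have key := switch_count ((configs m r n d).filter (fun f => f p' = f q'))
    (Finset.filter_subset _ _) p q hpq (univ \ {p', q'}) (by
      intro f hf x hx
      simp only [Finset.mem_filter, Finset.mem_sdiff, Finset.mem_univ, Finset.mem_insert,
        Finset.mem_singleton, not_or, true_and] at hf hx ⊢
      refine ⟨comp_mem_configs hf.1 _, ?_⟩
      simp only [Function.comp]
      rw [Equiv.swap_apply_of_ne_of_ne h1.symm (Ne.symm hx.1),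
        Equiv.swap_apply_of_ne_of_ne h2.symm (Ne.symm hx.2)]
      exact hf.2)
  rw [Finset.filter_filter] at key
  have hc : (univ \ {p', q'} : Finset (Fin m × Fin r)).card = m * r - 2 := by
    rw [Finset.card_sdiff_of_subset (Finset.subset_univ _), Finset.card_pair hpq']
    simp
  rw [hc] at key
  calc _ ≤ (m * r) * (d * ((configs m r n d).filter (fun f => f p' = f q')).card) := by gcongr
    _ = d * ((m * r) * ((configs m r n d).filter (fun f => f p' = f q')).card) := by ring
    _ ≤ _ := Nat.mul_le_mul_left d (count_one p' q' hpq')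

lemma sum_loops {m r n d : ℕ} (hmr : 0 < m * r) :
    ∑ f ∈ configs m r n d, (loops f).card ≤ r * d * (configs m r n d).card := by
  have e1 : ∑ f ∈ configs m r n d, (loops f).card
      = ∑ x ∈ (univ : Finset ((Fin m × Fin r) × (Fin m × Fin r))),
        ((configs m r n d).filter (fun f => x.1.1 = x.2.1 ∧ x.1 ≠ x.2 ∧ f x.1 = f x.2)).card := by
    simp only [loops, Finset.card_filter]
    rw [Finset.sum_comm]
  rw [e1]
  refine Nat.le_of_mul_le_mul_left ?_ hmr
  rw [Finset.mul_sum]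
  have hb : ∀ x : (Fin m × Fin r) × (Fin m × Fin r), (m * r) *
      ((configs m r n d).filter (fun f => x.1.1 = x.2.1 ∧ x.1 ≠ x.2 ∧ f x.1 = f x.2)).card
      ≤ if x.1.1 = x.2.1 then d * (configs m r n d).card else 0 := by
    intro x
    split_ifs with h
    · by_cases h' : x.1 = x.2
      · simp [h']
      · simpa [h, h'] using count_one (n := n) (d := d) x.1 x.2 h'
    · simp [h]
  refine (Finset.sum_le_sum fun x _ => hb x).trans ?_
  have hin : ∀ i : Fin m, (∑ y : Fin m × Fin r,
      if i = y.1 then d * (configs m r n d).card else 0) = r * (d * (configs m r n d).card) := by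
    intro i
    rw [Fintype.sum_prod_type, Finset.sum_comm]
    simp
  rw [Fintype.sum_prod_type]
  simp only [hin]
  simp only [Finset.sum_const, Finset.card_univ, Fintype.card_prod, Fintype.card_fin, smul_eq_mul]
  exact le_of_eq (by ring)

lemma sum_dups {m r n d : ℕ} (hr : 3 ≤ r) (hm : 1 ≤ m) :
    ∑ f ∈ configs m r n d, (dups f).card ≤ 3 * d ^ 2 * (configs m r n d).card := by
  set a0 : Fin r := ⟨0, by omega⟩ with ha0
  set a1 : Fin r := ⟨1, by omega⟩ with ha1
  have h01 : a0 ≠ a1 := by simp [ha0, ha1]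
  -- a duplicated row produces two coincidences in disjoint pairs of positions
  have hsub : ∀ f : Fin m × Fin r → Fin n, (dups f).card ≤
      ((univ : Finset ((Fin m × Fin m) × (Fin r × Fin r))).filter (fun x =>
        x.1.1 ≠ x.1.2 ∧ x.2.1 ≠ x.2.2 ∧ f (x.1.2, x.2.2) = f (x.1.1, a1) ∧
          f (x.1.2, x.2.1) = f (x.1.1, a0))).card := by
    intro f
    refine Finset.card_le_card_of_surjOn (fun x => x.1) ?_
    rintro ⟨i, k⟩ hik
    simp only [dups, Finset.coe_filter, Finset.mem_univ, true_and, Set.mem_ofPred_eq] at hik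
    obtain ⟨h1, h2, h3⟩ := hik
    obtain ⟨a, ha⟩ := mem_row.1 (h3 ▸ mem_row.2 ⟨a0, rfl⟩ : f (i, a0) ∈ row f k)
    obtain ⟨b, hb⟩ := mem_row.1 (h3 ▸ mem_row.2 ⟨a1, rfl⟩ : f (i, a1) ∈ row f k)
    refine ⟨((i, k), (a, b)), ?_, rfl⟩
    simp only [Finset.coe_filter, Finset.mem_univ, true_and, Set.mem_ofPred_eq]
    refine ⟨h1, ?_, hb, ha⟩
    rintro rfl
    exact h01 (h2 (ha.symm.trans hb))
  refine (Finset.sum_le_sum fun f _ => hsub f).trans ?_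
  simp only [Finset.card_filter]
  rw [Finset.sum_comm]
  simp only [← Finset.card_filter]
  have h3 : 3 ≤ m * r := by nlinarith
  refine Nat.le_of_mul_le_mul_left (c := (m * r) * (m * r - 2)) ?_
    (Nat.mul_pos (by omega) (by omega))
  rw [Finset.mul_sum]
  have hb : ∀ x : (Fin m × Fin m) × (Fin r × Fin r), (m * r) * (m * r - 2) *
      ((configs m r n d).filter (fun f => x.1.1 ≠ x.1.2 ∧ x.2.1 ≠ x.2.2 ∧
        f (x.1.2, x.2.2) = f (x.1.1, a1) ∧ f (x.1.2, x.2.1) = f (x.1.1, a0))).card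
      ≤ d * (d * (configs m r n d).card) := by
    intro x
    by_cases h1 : x.1.1 = x.1.2
    · simp [h1]
    by_cases h2 : x.2.1 = x.2.2
    · simp [h2]
    have := count_two (n := n) (d := d) (x.1.2, x.2.1) (x.1.1, a0) (x.1.2, x.2.2) (x.1.1, a1)
      (by simp [Ne.symm h1]) (by simp [Ne.symm h1]) (by simp [h1]) (by simp [h01])
    simpa [h1, h2, mul_assoc] using this
  refine (Finset.sum_le_sum fun x _ => hb x).trans ?_
  simp only [Finset.sum_const, Finset.card_univ, Fintype.card_prod, Fintype.card_fin, smul_eq_mul]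
  obtain ⟨t, ht⟩ : ∃ t, m * r = t + 3 := ⟨m * r - 3, by omega⟩
  have : m * m * (r * r) = (m * r) * (m * r) := by ring
  rw [this, ht]
  have h4 : t + 3 - 2 = t + 1 := by omega
  rw [h4]
  have : t + 3 ≤ 3 * (t + 1) := by omega
  calc (t + 3) * (t + 3) * (d * (d * (configs m r n d).card))
      ≤ (t + 3) * (3 * (t + 1)) * (d * (d * (configs m r n d).card)) := by gcongr
    _ = _ := by ring

/-! ### Removing defects by exchanges -/

/-- For all but boundedly many rows `j`, no row meets both row `i` and row `j`. -/
lemma exists_far {m r n d : ℕ} {f : Fin m × Fin r → Fin n} (hf : f ∈ configs m r n d)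
    (hm : r * (d * (r * d)) < m) (i : Fin m) :
    ∃ j : Fin m, ∀ a k b e c, f (i, a) = f (k, b) → f (k, e) ≠ f (j, c) := by
  by_contra hcon
  push Not at hcon
  have hsub : (univ : Finset (Fin m)) ⊆ (univ : Finset (Fin r)).biUnion (fun a =>
      (univ.filter (fun p => f p = f (i, a))).biUnion (fun p =>
        (univ : Finset (Fin r)).biUnion (fun e =>
          (univ.filter (fun q => f q = f (p.1, e))).image Prod.fst))) := by
    intro j _
    obtain ⟨a, k, b, e, c, h1, h2⟩ := hcon j
    simp only [Finset.mem_biUnion, Finset.mem_univ, true_and, Finset.mem_filter,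
      Finset.mem_image]
    exact ⟨a, (k, b), h1.symm, e, (j, c), h2.symm, rfl⟩
  have hcard := Finset.card_le_card hsub
  rw [Finset.card_univ, Fintype.card_fin] at hcard
  have hfib := mem_configs.1 hf
  refine absurd (hcard.trans ?_) (not_le.2 hm)
  refine (Finset.card_biUnion_le_card_mul _ _ (d * (r * d)) ?_).trans (by simp)
  intro a _
  refine (Finset.card_biUnion_le_card_mul _ _ (r * d) ?_).trans (by rw [hfib])
  intro p _
  refine (Finset.card_biUnion_le_card_mul _ _ d ?_).trans (by simp)
  intro e _
  exact Finset.card_image_le.trans (hfib _).le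

/-- A defective configuration loses a defect by exchanging an entry of a defective row with an
entry of a row far away from it; no defect is created, because a new coincidence would give a row
meeting both. -/
lemma exists_improving_swap {m r n d : ℕ} (hr : 3 ≤ r) {f : Fin m × Fin r → Fin n}
    (hf : f ∈ configs m r n d) (hm : r * (d * (r * d)) < m) (hdef : defects f ≠ 0) :
    ∃ p q, defects (f ∘ Equiv.swap p q) < defects f := by
  -- the position to be changed
  obtain ⟨i, a, hbad⟩ : ∃ (i : Fin m) (a : Fin r),
      (∃ q, ((i, a), q) ∈ loops f) ∨ (∃ k, (i, k) ∈ dups f) := by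
    by_cases h : (loops f).card = 0
    · have h2 : (dups f).card ≠ 0 := by unfold defects at hdef; omega
      obtain ⟨⟨i, k⟩, hik⟩ := Finset.card_ne_zero.1 h2
      exact ⟨i, ⟨0, by omega⟩, Or.inr ⟨k, hik⟩⟩
    · obtain ⟨⟨⟨i, a⟩, q⟩, hik⟩ := Finset.card_ne_zero.1 h
      exact ⟨i, a, Or.inl ⟨q, hik⟩⟩
  obtain ⟨j, hj⟩ := exists_far hf hm i
  set c : Fin r := ⟨0, by omega⟩
  set g := f ∘ Equiv.swap (i, a) (j, c) with hg
  have hdisj : ∀ b e, f (i, b) ≠ f (j, e) := fun b e => hj b i b b e rfl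
  have hij : i ≠ j := by rintro rfl; exact hdisj a a rfl
  have g1 : g (i, a) = f (j, c) := by simp [hg]
  have g2 : g (j, c) = f (i, a) := by simp [hg]
  have g3 : ∀ p, p ≠ (i, a) → p ≠ (j, c) → g p = f p := by
    intro p h1 h2; simp [hg, Equiv.swap_apply_of_ne_of_ne h1 h2]
  have g4 : ∀ b, b ≠ a → g (i, b) = f (i, b) := fun b hb =>
    g3 _ (by simp [hb]) (by simp [hij])
  have g5 : ∀ e, e ≠ c → g (j, e) = f (j, e) := fun b hb =>
    g3 _ (by simp [Ne.symm hij]) (by simp [hb])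
  have g6 : ∀ k, k ≠ i → k ≠ j → ∀ b, g (k, b) = f (k, b) := fun k h1 h2 b =>
    g3 _ (by simp [h1]) (by simp [h2])
  have hex : ∀ x : Fin r, ∃ b b' : Fin r, b ≠ x ∧ b' ≠ x ∧ b ≠ b' := by
    intro x
    have : 1 < (univ.erase x).card := by
      rw [Finset.card_erase_of_mem (Finset.mem_univ _)]; simp; omega
    obtain ⟨b, hb, b', hbne, hne⟩ := Finset.one_lt_card.1 this
    exact ⟨b, b', Finset.ne_of_mem_erase hb, Finset.ne_of_mem_erase hbne, hne⟩
  -- the two changed positions take part in no loop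
  have l1 : ∀ b, b ≠ a → g (i, a) ≠ g (i, b) := by
    intro b hb; rw [g1, g4 b hb]; exact (hdisj b c).symm
  have l2 : ∀ e, e ≠ c → g (j, c) ≠ g (j, e) := by
    intro e he; rw [g2, g5 e he]; exact hdisj a e
  have hloop : ∀ p q, (p, q) ∈ loops g →
      p ≠ (i, a) ∧ q ≠ (i, a) ∧ p ≠ (j, c) ∧ q ≠ (j, c) := by
    rintro ⟨k, b⟩ ⟨k', b'⟩ hpq
    simp only [loops, Finset.mem_filter, Finset.mem_univ, true_and] at hpq
    obtain ⟨rfl, h2, h3⟩ := hpq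
    have hbb : b ≠ b' := by rintro rfl; exact h2 rfl
    refine ⟨?_, ?_, ?_, ?_⟩
    · rintro ⟨⟩; exact l1 b' hbb.symm h3
    · rintro ⟨⟩; exact l1 b hbb h3.symm
    · intro h; rw [Prod.mk.injEq] at h; obtain ⟨rfl, rfl⟩ := h; exact l2 b' hbb.symm h3
    · intro h; rw [Prod.mk.injEq] at h; obtain ⟨rfl, rfl⟩ := h; exact l2 b hbb h3.symm
  have hloops : loops g ⊆ loops f := by
    rintro ⟨p, q⟩ hpq
    obtain ⟨h1, h2, h3, h4⟩ := hloop p q hpq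
    simp only [loops, Finset.mem_filter, Finset.mem_univ, true_and] at hpq ⊢
    rw [g3 p h1 h3, g3 q h2 h4] at hpq
    exact hpq
  -- the two changed rows take part in no duplication
  have d1 : ∀ k, k ≠ i → k ≠ j → row g i ≠ row g k := by
    intro k hki hkj h
    obtain ⟨b, -, hb, -, -⟩ := hex a
    obtain ⟨x, hx⟩ := mem_row.1 (h ▸ mem_row.2 ⟨b, rfl⟩ : g (i, b) ∈ row g k)
    obtain ⟨y, hy⟩ := mem_row.1 (h ▸ mem_row.2 ⟨a, rfl⟩ : g (i, a) ∈ row g k)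
    rw [g6 k hki hkj, g4 b hb] at hx
    rw [g6 k hki hkj, g1] at hy
    exact hj b k x y c hx.symm hy
  have d2 : ∀ k, k ≠ i → k ≠ j → row g j ≠ row g k := by
    intro k hki hkj h
    obtain ⟨b, -, hb, -, -⟩ := hex c
    obtain ⟨x, hx⟩ := mem_row.1 (h ▸ mem_row.2 ⟨b, rfl⟩ : g (j, b) ∈ row g k)
    obtain ⟨y, hy⟩ := mem_row.1 (h ▸ mem_row.2 ⟨c, rfl⟩ : g (j, c) ∈ row g k)
    rw [g6 k hki hkj, g5 b hb] at hx
    rw [g6 k hki hkj, g2] at hy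
    exact hj a k y x b hy.symm hx
  -- rows `i` and `j` can only become equal as sets when both have repetitions, since `3 ≤ r`
  have d3 : row g i = row g j → ¬ Function.Injective (fun b => g (i, b)) := by
    intro h hinj
    obtain ⟨b, b', hb, hbne, hne⟩ := hex a
    have key : ∀ b, b ≠ a → g (i, b) = f (i, a) := by
      intro b hb
      obtain ⟨x, hx⟩ := mem_row.1 (h ▸ mem_row.2 ⟨b, rfl⟩ : g (i, b) ∈ row g j)
      by_cases hxc : x = c
      · rw [← hx, hxc, g2]
      · rw [g5 x hxc, g4 b hb] at hx
        exact absurd hx.symm (hdisj b x)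
    exact hne (hinj ((key b hb).trans (key b' hbne).symm))
  have d4 : row g j = row g i → ¬ Function.Injective (fun b => g (j, b)) := by
    intro h hinj
    obtain ⟨b, b', hb, hbne, hne⟩ := hex c
    have key : ∀ b, b ≠ c → g (j, b) = f (j, c) := by
      intro b hb
      obtain ⟨x, hx⟩ := mem_row.1 (h ▸ mem_row.2 ⟨b, rfl⟩ : g (j, b) ∈ row g i)
      by_cases hxc : x = a
      · rw [← hx, hxc, g1]
      · rw [g4 x hxc, g5 b hb] at hx
        exact absurd hx (hdisj x b)
    exact hne (hinj ((key b hb).trans (key b' hbne).symm))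
  have hdup : ∀ k l, (k, l) ∈ dups g → k ≠ i ∧ l ≠ i ∧ k ≠ j ∧ l ≠ j := by
    intro k l hkl
    simp only [dups, Finset.mem_filter, Finset.mem_univ, true_and] at hkl
    obtain ⟨h1, h2, h3⟩ := hkl
    by_cases ki : k = i
    · subst ki
      by_cases lj : l = j
      · subst lj; exact absurd h2 (d3 h3)
      · exact absurd h3 (d1 l h1.symm lj)
    by_cases kj : k = j
    · subst kj
      by_cases li : l = i
      · subst li; exact absurd h2 (d4 h3)
      · exact absurd h3 (d2 l li h1.symm)
    refine ⟨ki, ?_, kj, ?_⟩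
    · rintro rfl; exact d1 k ki kj h3.symm
    · rintro rfl; exact d2 k ki kj h3.symm
  have hrow : ∀ k, k ≠ i → k ≠ j → row g k = row f k := by
    intro k h1 h2; unfold row; simp only [g6 k h1 h2]
  have hdups : dups g ⊆ dups f := by
    rintro ⟨k, l⟩ hkl
    obtain ⟨h1, h2, h3, h4⟩ := hdup k l hkl
    simp only [dups, Finset.mem_filter, Finset.mem_univ, true_and] at hkl ⊢
    rw [hrow k h1 h3, hrow l h2 h4] at hkl
    simp only [g6 k h1 h3] at hkl
    exact hkl
  refine ⟨(i, a), (j, c), ?_⟩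
  change defects g < defects f
  unfold defects
  rcases hbad with ⟨q, hq⟩ | ⟨k, hk⟩
  · have : loops g ⊂ loops f := (Finset.ssubset_iff_of_subset hloops).2
      ⟨_, hq, fun h => (hloop _ _ h).1 rfl⟩
    exact add_lt_add_of_lt_of_le (Finset.card_lt_card this) (Finset.card_le_card hdups)
  · have : dups g ⊂ dups f := (Finset.ssubset_iff_of_subset hdups).2
      ⟨_, hk, fun h => (hdup _ _ h).1 rfl⟩
    exact add_lt_add_of_le_of_lt (Finset.card_le_card hloops) (Finset.card_lt_card this)

lemma card_defects_le {m r n d : ℕ} (hr : 3 ≤ r) (hm : r * (d * (r * d)) < m) (K : ℕ) :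
    ((configs m r n d).filter (fun f => defects f ≤ K)).card
      ≤ ((m * r) ^ 2) ^ K * ((configs m r n d).filter (fun f => defects f = 0)).card := by
  induction K with
  | zero => simp
  | succ K ih =>
    have hmr : 0 < m * r := Nat.mul_pos (by omega) (by omega)
    have hsub : (configs m r n d).filter (fun f => defects f ≤ K + 1) ⊆
        (univ : Finset ((Fin m × Fin r) × (Fin m × Fin r))).biUnion (fun x =>
          ((configs m r n d).filter (fun f => defects f ≤ K)).image
            (fun f => f ∘ Equiv.swap x.1 x.2)) := by
      intro f hf
      rw [Finset.mem_filter] at hf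
      simp only [Finset.mem_biUnion, Finset.mem_univ, true_and, Finset.mem_image,
        Finset.mem_filter]
      by_cases h0 : defects f = 0
      · have p0 : Fin m × Fin r := ⟨⟨0, by omega⟩, ⟨0, by omega⟩⟩
        exact ⟨(p0, p0), f, ⟨hf.1, by omega⟩, by simp⟩
      · obtain ⟨p, q, hpq⟩ := exists_improving_swap hr hf.1 hm h0
        refine ⟨(p, q), f ∘ Equiv.swap p q, ⟨comp_mem_configs hf.1 _, by omega⟩, ?_⟩
        ext x; simp
    refine (Finset.card_le_card hsub).trans ?_
    refine (Finset.card_biUnion_le_card_mul _ _ _ (fun x _ => Finset.card_image_le)).trans ?_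
    simp only [Finset.card_univ, Fintype.card_prod, Fintype.card_fin]
    calc _ ≤ m * r * (m * r) * (((m * r) ^ 2) ^ K *
          ((configs m r n d).filter (fun f => defects f = 0)).card) := by gcongr
      _ = _ := by ring

/-- Up to a polynomial factor, all configurations are free of defects: by Markov's inequality half
of them have boundedly many defects, and these are removed by boundedly many swaps. -/
lemma card_configs_le {m r n d : ℕ} (hr : 3 ≤ r) (hm : r * (d * (r * d)) < m) :
    (configs m r n d).card ≤ 2 * (((m * r) ^ 2) ^ (2 * (r * d + 3 * d ^ 2)) *
      ((configs m r n d).filter (fun f => defects f = 0)).card) := by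
  set C := r * d + 3 * d ^ 2 with hC
  have hmr : 0 < m * r := Nat.mul_pos (by omega) (by omega)
  have hsum : ∑ f ∈ configs m r n d, defects f ≤ C * (configs m r n d).card := by
    unfold defects
    rw [Finset.sum_add_distrib, hC, add_mul]
    exact add_le_add (sum_loops hmr) (sum_dups hr (by omega))
  have hmark : (2 * C + 1) * ((configs m r n d).filter (fun f => ¬ defects f ≤ 2 * C)).card
      ≤ C * (configs m r n d).card := by
    refine le_trans ?_ hsum
    refine le_trans ?_ (Finset.sum_le_sum_of_subset (Finset.filter_subset
      (fun f => ¬ defects f ≤ 2 * C) _))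
    rw [mul_comm, ← smul_eq_mul]
    refine Finset.card_nsmul_le_sum _ _ _ ?_
    intro f hf
    have := (Finset.mem_filter.1 hf).2
    omega
  have hsplit := Finset.card_filter_add_card_filter_not (s := configs m r n d)
    (fun f => defects f ≤ 2 * C)
  have hhalf : (configs m r n d).card
      ≤ 2 * ((configs m r n d).filter (fun f => defects f ≤ 2 * C)).card := by
    nlinarith
  exact hhalf.trans (Nat.mul_le_mul_left 2 (card_defects_le hr hm _))

/-! ### Simple configurations and hypergraphs -/

/-- The configurations that list the edges of an `r`-uniform hypergraph without repetition. -/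
noncomputable def simpleConfigs (m r n d : ℕ) : Finset (Fin m × Fin r → Fin n) :=
  (configs m r n d).filter (fun f =>
    (∀ i, Function.Injective (fun a => f (i, a))) ∧ Function.Injective (row f))

/-- The hypergraph whose edges are the rows of `f`. -/
noncomputable def edges {m r n : ℕ} (f : Fin m × Fin r → Fin n) : Finset (Finset (Fin n)) :=
  univ.image (row f)

lemma defects_zero_subset {m r n d : ℕ} :
    (configs m r n d).filter (fun f => defects f = 0) ⊆ simpleConfigs m r n d := by
  intro f hf
  rw [Finset.mem_filter] at hf
  obtain ⟨hf, h0⟩ := hf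
  unfold defects at h0
  have hl : loops f = ∅ := Finset.card_eq_zero.1 (by omega)
  have hd : dups f = ∅ := Finset.card_eq_zero.1 (by omega)
  have hinj : ∀ i, Function.Injective (fun a => f (i, a)) := by
    intro i a b hab
    by_contra hne
    have : ((i, a), (i, b)) ∈ loops f := by
      simp only [loops, Finset.mem_filter, Finset.mem_univ, true_and]
      exact ⟨by simp [hne], hab⟩
    simp [hl] at this
  refine Finset.mem_filter.2 ⟨hf, hinj, ?_⟩
  intro i k hik
  by_contra hne
  have : (i, k) ∈ dups f := by
    simp only [dups, Finset.mem_filter, Finset.mem_univ, true_and]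
    exact ⟨hne, hinj i, hik⟩
  simp [hd] at this

lemma degree_edges {m r n : ℕ} {f : Fin m × Fin r → Fin n}
    (h1 : ∀ i, Function.Injective (fun a => f (i, a))) (h2 : Function.Injective (row f))
    (v : Fin n) :
    ((edges f).filter (fun e => v ∈ e)).card = (univ.filter (fun p => f p = v)).card := by
  symm
  refine Finset.card_bij (fun p _ => row f p.1) ?_ ?_ ?_
  · rintro ⟨i, a⟩ hp
    simp only [Finset.mem_filter, Finset.mem_univ, true_and] at hp
    simp only [edges, Finset.mem_filter, Finset.mem_image, Finset.mem_univ, true_and]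
    exact ⟨⟨i, rfl⟩, mem_row.2 ⟨a, hp⟩⟩
  · rintro ⟨i, a⟩ hp ⟨k, b⟩ hq h
    simp only [Finset.mem_filter, Finset.mem_univ, true_and] at hp hq
    obtain rfl : i = k := h2 h
    rw [h1 i (hp.trans hq.symm)]
  · intro e he
    simp only [edges, Finset.mem_filter, Finset.mem_image, Finset.mem_univ, true_and] at he
    obtain ⟨⟨i, rfl⟩, hv⟩ := he
    obtain ⟨a, ha⟩ := mem_row.1 hv
    exact ⟨(i, a), by simpa using ha, rfl⟩

lemma edges_mem {m r n d : ℕ} {f : Fin m × Fin r → Fin n} (hf : f ∈ simpleConfigs m r n d) :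
    edges f ∈ regularFamily n r d := by
  obtain ⟨hf, h1, h2⟩ := Finset.mem_filter.1 hf
  simp only [regularFamily, Finset.mem_filter, Finset.mem_univ, true_and]
  constructor
  · intro e he
    simp only [edges, Finset.mem_image, Finset.mem_univ, true_and] at he
    obtain ⟨i, rfl⟩ := he
    rw [row, Finset.card_image_of_injective _ (h1 i)]
    simp
  · intro v
    rw [degree_edges h1 h2]
    exact mem_configs.1 hf v

lemma card_of_mem_regularFamily {m r n d : ℕ} (hr : 0 < r) (hmn : m * r = d * n)
    {E : Finset (Finset (Fin n))} (hE : E ∈ regularFamily n r d) : E.card = m := by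
  simp only [regularFamily, Finset.mem_filter, Finset.mem_univ, true_and] at hE
  have h := Finset.sum_card_bipartiteAbove_eq_sum_card_bipartiteBelow
    (s := (univ : Finset (Fin n))) (t := E) (fun v e => v ∈ e)
  simp only [Finset.bipartiteAbove, Finset.bipartiteBelow, hE.2] at h
  have h3 : ∑ e ∈ E, (univ.filter (fun v => v ∈ e)).card = E.card * r := by
    rw [Finset.sum_congr rfl (fun e he => ?_), Finset.sum_const, smul_eq_mul]
    rw [← hE.1 e he]; congr 1; ext; simp
  rw [h3] at h
  simp at h
  refine Nat.eq_of_mul_eq_mul_right hr ?_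
  rw [← h, hmn, mul_comm]

/-- Every hypergraph of the family has `m! * (r!) ^ m` listings: order its edges, and the vertices
of each edge. -/
lemma card_listings {m r n d : ℕ} (hr : 0 < r) (hmn : m * r = d * n)
    {E : Finset (Finset (Fin n))} (hE : E ∈ regularFamily n r d) :
    ((simpleConfigs m r n d).filter (fun f => edges f = E)).card
      = m.factorial * r.factorial ^ m := by
  have hcard := card_of_mem_regularFamily hr hmn hE
  have hE' := hE
  simp only [regularFamily, Finset.mem_filter, Finset.mem_univ, true_and] at hE'
  let Φ : (Σ σ : Fin m ≃ {e // e ∈ E}, ∀ i, Fin r ≃ {v // v ∈ (σ i).1}) →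
      (Fin m × Fin r → Fin n) := fun x p => (x.2 p.1 p.2).1
  have hrow : ∀ x i, row (Φ x) i = (x.1 i).1 := by
    intro x i
    ext v
    rw [mem_row]
    constructor
    · rintro ⟨a, rfl⟩; exact (x.2 i a).2
    · intro hv; exact ⟨(x.2 i).symm ⟨v, hv⟩, by simp [Φ]⟩
  have hΦinj : Function.Injective Φ := by
    rintro ⟨σ, τ⟩ ⟨σ', τ'⟩ h
    obtain rfl : σ = σ' := by
      ext1 i
      apply Subtype.ext
      rw [← hrow ⟨σ, τ⟩ i, h, hrow]
    congr 1
    funext i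
    ext1 a
    exact Subtype.ext (congrFun h (i, a))
  have himg : (simpleConfigs m r n d).filter (fun f => edges f = E) = univ.image Φ := by
    ext f
    simp only [Finset.mem_filter, Finset.mem_image, Finset.mem_univ, true_and]
    constructor
    · rintro ⟨hf, rfl⟩
      obtain ⟨hf, h1, h2⟩ := Finset.mem_filter.1 hf
      have hmem : ∀ i, row f i ∈ edges f := fun i => Finset.mem_image_of_mem _ (Finset.mem_univ _)
      let σ : Fin m ≃ {e // e ∈ edges f} := Equiv.ofBijective (fun i => ⟨row f i, hmem i⟩)
        ⟨fun i k h => h2 (congrArg Subtype.val h), by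
          rintro ⟨e, he⟩
          obtain ⟨i, -, hi⟩ := Finset.mem_image.1 he
          exact ⟨i, Subtype.ext hi⟩⟩
      let τ : ∀ i, Fin r ≃ {v // v ∈ (σ i).1} := fun i =>
        Equiv.ofBijective (fun a => ⟨f (i, a), mem_row.2 ⟨a, rfl⟩⟩)
          ⟨fun a b h => h1 i (congrArg Subtype.val h), by
            rintro ⟨v, hv⟩
            obtain ⟨a, ha⟩ := mem_row.1 hv
            exact ⟨a, Subtype.ext ha⟩⟩
      exact ⟨⟨σ, τ⟩, rfl⟩
    · rintro ⟨x, rfl⟩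
      have h1 : ∀ i, Function.Injective (fun a => Φ x (i, a)) := by
        intro i a b h
        exact (x.2 i).injective (Subtype.ext h)
      have h2 : Function.Injective (row (Φ x)) := by
        intro i k h
        rw [hrow, hrow] at h
        exact x.1.injective (Subtype.ext h)
      have h3 : edges (Φ x) = E := by
        ext e
        simp only [edges, Finset.mem_image, Finset.mem_univ, true_and, hrow]
        constructor
        · rintro ⟨i, rfl⟩; exact (x.1 i).2
        · intro he; exact ⟨x.1.symm ⟨e, he⟩, by simp⟩
      refine ⟨Finset.mem_filter.2 ⟨mem_configs.2 fun v => ?_, h1, h2⟩, h3⟩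
      rw [← degree_edges h1 h2 v, h3]
      exact hE'.2 v
  rw [himg, Finset.card_image_of_injective _ hΦinj, Finset.card_univ, Fintype.card_sigma]
  have hin : ∀ σ : Fin m ≃ {e // e ∈ E},
      Fintype.card (∀ i, Fin r ≃ {v // v ∈ (σ i).1}) = r.factorial ^ m := by
    intro σ
    rw [Fintype.card_pi]
    rw [Finset.prod_congr rfl (fun i _ => ?_), Finset.prod_const, Finset.card_univ,
      Fintype.card_fin]
    have hc : Fintype.card (Fin r) = Fintype.card {v // v ∈ (σ i).1} := by
      rw [Fintype.card_coe, Fintype.card_fin, hE'.1 _ (σ i).2]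
    rw [Fintype.card_equiv (Fintype.equivOfCardEq hc), Fintype.card_fin]
  simp only [hin, Finset.sum_const, Finset.card_univ, smul_eq_mul]
  have hc : Fintype.card (Fin m) = Fintype.card {e // e ∈ E} := by
    rw [Fintype.card_coe, Fintype.card_fin, hcard]
  rw [Fintype.card_equiv (Fintype.equivOfCardEq hc), Fintype.card_fin]

lemma card_simple_filter {m r n d : ℕ} (hr : 0 < r) (hmn : m * r = d * n)
    (Q : Finset (Finset (Fin n)) → Prop) :
    ((simpleConfigs m r n d).filter (fun f => Q (edges f))).card
      = ((regularFamily n r d).filter Q).card * (m.factorial * r.factorial ^ m) := by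
  rw [Finset.card_eq_sum_card_fiberwise (f := edges) (t := (regularFamily n r d).filter Q)]
  · rw [Finset.sum_congr rfl (fun E hE => ?_), Finset.sum_const, smul_eq_mul]
    rw [Finset.mem_filter] at hE
    rw [← card_listings hr hmn hE.1, Finset.filter_filter]
    congr 1
    ext f
    simp only [Finset.mem_filter]
    constructor
    · rintro ⟨h1, -, h2⟩; exact ⟨h1, h2⟩
    · rintro ⟨h1, rfl⟩; exact ⟨h1, hE.2, rfl⟩
  · intro f hf
    have hfmem := Finset.mem_filter.1 (Finset.mem_coe.1 hf)
    exact Finset.mem_coe.2 (Finset.mem_filter.2 ⟨edges_mem hfmem.1, hfmem.2⟩)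

/-! ### First moment of independent sets -/

/-- The positions of `f` holding a vertex of `S`. -/
noncomputable def pattern {m r n : ℕ} (S : Finset (Fin n)) (f : Fin m × Fin r → Fin n) :
    Finset (Fin m × Fin r) :=
  univ.filter (fun p => f p ∈ S)

lemma card_pattern {m r n d : ℕ} (S : Finset (Fin n)) {f : Fin m × Fin r → Fin n}
    (hf : f ∈ configs m r n d) : (pattern S f).card = d * S.card := by
  rw [Finset.card_eq_sum_card_fiberwise (f := f) (t := S)]
  · rw [Finset.sum_congr rfl (fun v hv => ?_), Finset.sum_const, smul_eq_mul, mul_comm]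
    rw [← mem_configs.1 hf v, pattern, Finset.filter_filter]
    congr 1
    ext p
    simp only [Finset.mem_filter, Finset.mem_univ, true_and]
    constructor
    · rintro ⟨-, h⟩; exact h
    · rintro rfl; exact ⟨hv, rfl⟩
  · intro p hp
    simpa [pattern] using hp

lemma card_pattern_fiber_le {m r n d : ℕ} (S : Finset (Fin n)) (A B : Finset (Fin m × Fin r))
    (hAB : A.card = B.card) :
    ((configs m r n d).filter (fun f => pattern S f = A)).card
      ≤ ((configs m r n d).filter (fun f => pattern S f = B)).card := by
  have e : {x // x ∈ B} ≃ {x // x ∈ A} := Fintype.equivOfCardEq (by simp [hAB])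
  set σ : Equiv.Perm (Fin m × Fin r) := e.extendSubtype with hσ
  have hmem : ∀ p, σ p ∈ A ↔ p ∈ B := by
    intro p
    constructor
    · intro h
      by_contra hp
      exact e.extendSubtype_not_mem p hp h
    · intro h; exact e.extendSubtype_mem p h
  refine Finset.card_le_card_of_injOn (fun f => f ∘ σ) ?_ ?_
  · intro f hf
    simp only [Finset.coe_filter, Set.mem_ofPred_eq] at hf ⊢
    refine ⟨comp_mem_configs hf.1 _, ?_⟩
    ext p
    rw [← hmem, ← hf.2]
    simp [pattern]
  · intro f _ g _ h
    exact σ.surjective.injective_comp_right h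

/-- By symmetry the pattern of a random configuration is a uniformly random set of positions. -/
lemma card_filter_pattern {m r n d : ℕ} (S : Finset (Fin n)) (Q : Finset (Fin m × Fin r) → Prop) :
    ((configs m r n d).filter (fun f => Q (pattern S f))).card * (m * r).choose (d * S.card)
      = ((powersetCard (d * S.card) univ).filter Q).card * (configs m r n d).card := by
  set k := d * S.card with hk
  have hmaps : ∀ f ∈ configs m r n d, pattern S f ∈ powersetCard k univ := fun f hf =>
    Finset.mem_powersetCard.2 ⟨Finset.subset_univ _, card_pattern S hf⟩
  have hsum : ∀ Q : Finset (Fin m × Fin r) → Prop,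
      ((configs m r n d).filter (fun f => Q (pattern S f))).card
      = ∑ A ∈ (powersetCard k univ).filter Q,
        ((configs m r n d).filter (fun f => pattern S f = A)).card := by
    intro Q
    rw [Finset.card_eq_sum_card_fiberwise (f := pattern S) (t := (powersetCard k univ).filter Q)]
    · refine Finset.sum_congr rfl (fun A hA => ?_)
      rw [Finset.filter_filter]
      congr 1
      ext f
      simp only [Finset.mem_filter]
      constructor
      · rintro ⟨h1, -, h2⟩; exact ⟨h1, h2⟩
      · rintro ⟨h1, rfl⟩; exact ⟨h1, (Finset.mem_filter.1 hA).2, rfl⟩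
    · intro f hf
      have hfmem := Finset.mem_filter.1 (Finset.mem_coe.1 hf)
      exact Finset.mem_coe.2 (Finset.mem_filter.2 ⟨hmaps f hfmem.1, hfmem.2⟩)
  by_cases hne : (powersetCard k (univ : Finset (Fin m × Fin r))).Nonempty
  · obtain ⟨A₀, hA₀⟩ := hne
    set t := ((configs m r n d).filter (fun f => pattern S f = A₀)).card with ht
    have hconst : ∀ A ∈ powersetCard k (univ : Finset (Fin m × Fin r)),
        ((configs m r n d).filter (fun f => pattern S f = A)).card = t := by
      intro A hA
      have h : A.card = A₀.card :=
        (Finset.mem_powersetCard.1 hA).2.trans (Finset.mem_powersetCard.1 hA₀).2.symm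
      exact le_antisymm (card_pattern_fiber_le S A A₀ h) (card_pattern_fiber_le S A₀ A h.symm)
    have h1 : ∀ Q : Finset (Fin m × Fin r) → Prop,
        ((configs m r n d).filter (fun f => Q (pattern S f))).card
        = ((powersetCard k univ).filter Q).card * t := by
      intro Q
      rw [hsum Q, Finset.sum_congr rfl (fun A hA => hconst A (Finset.mem_filter.1 hA).1),
        Finset.sum_const, smul_eq_mul]
    have h2 := h1 (fun _ => True)
    simp only [Finset.filter_true, Finset.card_powersetCard, Finset.card_univ, Fintype.card_prod,
      Fintype.card_fin] at h2
    rw [h1 Q, h2]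
    ring
  · have hemp := Finset.not_nonempty_iff_eq_empty.1 hne
    have h2 := hsum Q
    rw [hemp] at h2 ⊢
    simp only [Finset.filter_empty, Finset.sum_empty] at h2
    rw [h2]; simp

/-- Sets of `k` positions containing no full row are counted by the coefficient of `z ^ k` in
`((1 + z) ^ r - z ^ r) ^ m`, which is at most the value of this polynomial divided by `z ^ k`. -/
lemma card_noFull_le {m r : ℕ} (k : ℕ) (z : ℝ) (hz : 0 < z) :
    (((powersetCard k univ).filter
      (fun A : Finset (Fin m × Fin r) => ∀ i, ∃ a, (i, a) ∉ A)).card : ℝ) * z ^ k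
      ≤ ((z + 1) ^ r - z ^ r) ^ m := by
  set F := (powersetCard k univ).filter
      (fun A : Finset (Fin m × Fin r) => ∀ i, ∃ a, (i, a) ∉ A) with hF
  let g : Finset (Fin m × Fin r) → Fin m → Finset (Fin r) :=
    fun A i => univ.filter (fun a => (i, a) ∈ A)
  have hginj : Function.Injective g := by
    intro A B h
    ext ⟨i, a⟩
    have := congrArg (fun s => a ∈ s) (congrFun h i)
    simpa [g] using this
  have hcard : ∀ A, A.card = ∑ i, (g A i).card := by
    intro A
    rw [Finset.card_eq_sum_card_fiberwise (f := Prod.fst) (t := univ) (fun _ _ => by simp)]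
    refine Finset.sum_congr rfl fun i _ => ?_
    symm
    refine Finset.card_bij (fun a _ => (i, a)) ?_ ?_ ?_
    · intro a ha; simpa [g] using ha
    · intro a _ b _ h; simpa using h
    · rintro ⟨k, a⟩ h
      simp only [Finset.mem_filter] at h
      obtain ⟨h, rfl⟩ := h
      exact ⟨a, by simpa [g] using h, rfl⟩
  have hone : ∑ B ∈ (univ : Finset (Finset (Fin r))).erase univ, z ^ B.card
      = (z + 1) ^ r - z ^ r := by
    rw [Finset.sum_erase_eq_sub (Finset.mem_univ _)]
    have := Finset.sum_pow_mul_eq_add_pow z 1 (univ : Finset (Fin r))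
    simp only [one_pow, mul_one, Finset.powerset_univ, Finset.card_univ, Fintype.card_fin] at this
    rw [this]; simp
  have hprod : ((z + 1) ^ r - z ^ r) ^ m
      = ∑ x ∈ Fintype.piFinset (fun _ : Fin m => (univ : Finset (Finset (Fin r))).erase univ),
        ∏ i, z ^ (x i).card := by
    refine Eq.trans ?_ (Finset.prod_univ_sum
      (fun _ : Fin m => (univ : Finset (Finset (Fin r))).erase univ) (fun _ B => z ^ B.card))
    rw [hone, Finset.prod_const, Finset.card_univ, Fintype.card_fin]
  rw [hprod]
  have hleft : (F.card : ℝ) * z ^ k = ∑ x ∈ F.image g, ∏ i, z ^ (x i).card := by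
    rw [Finset.sum_image (fun A _ B _ h => hginj h), Finset.sum_congr rfl (fun A hA => ?_),
      Finset.sum_const, nsmul_eq_mul]
    rw [Finset.prod_pow_eq_pow_sum, ← hcard,
      (Finset.mem_powersetCard.1 (Finset.mem_filter.1 hA).1).2]
  rw [hleft]
  refine Finset.sum_le_sum_of_subset_of_nonneg ?_ (fun x _ _ => by positivity)
  intro x hx
  obtain ⟨A, hA, rfl⟩ := Finset.mem_image.1 hx
  rw [Fintype.mem_piFinset]
  intro i
  obtain ⟨a, ha⟩ := (Finset.mem_filter.1 hA).2 i
  refine Finset.mem_erase.2 ⟨fun h => ha ?_, Finset.mem_univ _⟩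
  have : a ∈ g A i := h ▸ Finset.mem_univ a
  simpa [g] using this

lemma indep_edges_iff {m r n : ℕ} (S : Finset (Fin n)) (f : Fin m × Fin r → Fin n) :
    IndepSet (edges f) S ↔ ∀ i, ∃ a, (i, a) ∉ pattern S f := by
  simp [IndepSet, edges, pattern, row, Finset.subset_iff]

/-- First moment bound, over configurations. -/
lemma card_indep_configs {m r n d s : ℕ} (z : ℝ) (hz : 0 < z) :
    (((configs m r n d).filter
      (fun f => ∃ S : Finset (Fin n), S.card = s ∧ IndepSet (edges f) S)).card : ℝ)
        * ((m * r).choose (d * s) : ℝ) * z ^ (d * s)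
      ≤ (n.choose s : ℝ) * ((z + 1) ^ r - z ^ r) ^ m * (configs m r n d).card := by
  have hsub : (configs m r n d).filter
      (fun f => ∃ S : Finset (Fin n), S.card = s ∧ IndepSet (edges f) S) ⊆
      (powersetCard s (univ : Finset (Fin n))).biUnion (fun S =>
        (configs m r n d).filter (fun f => IndepSet (edges f) S)) := by
    intro f hf
    obtain ⟨hf, S, hS, hI⟩ := Finset.mem_filter.1 hf
    exact Finset.mem_biUnion.2 ⟨S, Finset.mem_powersetCard.2 ⟨Finset.subset_univ _, hS⟩,
      Finset.mem_filter.2 ⟨hf, hI⟩⟩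
  have h1 : (((configs m r n d).filter
      (fun f => ∃ S : Finset (Fin n), S.card = s ∧ IndepSet (edges f) S)).card : ℝ)
      ≤ ∑ S ∈ powersetCard s (univ : Finset (Fin n)),
        (((configs m r n d).filter (fun f => IndepSet (edges f) S)).card : ℝ) := by
    exact_mod_cast (Finset.card_le_card hsub).trans Finset.card_biUnion_le
  have h2 : ∀ S ∈ powersetCard s (univ : Finset (Fin n)),
      (((configs m r n d).filter (fun f => IndepSet (edges f) S)).card : ℝ)
        * (((m * r).choose (d * s) : ℝ) * z ^ (d * s))
      ≤ ((z + 1) ^ r - z ^ r) ^ m * (configs m r n d).card := by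
    intro S hS
    have hSc := (Finset.mem_powersetCard.1 hS).2
    obtain ⟨Q, hQ⟩ : ∃ Q : Finset (Fin m × Fin r) → Prop,
        ∀ A, Q A ↔ ∀ i, ∃ a, (i, a) ∉ A := ⟨_, fun _ => Iff.rfl⟩
    have e := card_filter_pattern (d := d) S Q
    rw [Finset.filter_congr (fun f _ => (hQ (pattern S f)).trans (indep_edges_iff S f).symm),
      Finset.filter_congr (fun A _ => hQ A), hSc] at e
    have e' : (((configs m r n d).filter (fun f => IndepSet (edges f) S)).card : ℝ)
        * ((m * r).choose (d * s) : ℝ) = (((powersetCard (d * s) univ).filter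
      (fun A : Finset (Fin m × Fin r) => ∀ i, ∃ a, (i, a) ∉ A)).card : ℝ)
        * ((configs m r n d).card : ℝ) := by exact_mod_cast e
    rw [← mul_assoc, e', mul_right_comm]
    exact mul_le_mul_of_nonneg_right (card_noFull_le (d * s) z hz) (Nat.cast_nonneg _)
  rw [mul_assoc]
  refine (mul_le_mul_of_nonneg_right h1 (by positivity)).trans ?_
  rw [Finset.sum_mul]
  refine (Finset.sum_le_sum h2).trans (le_of_eq ?_)
  rw [Finset.sum_const, Finset.card_powersetCard, Finset.card_univ, Fintype.card_fin,
    nsmul_eq_mul, mul_assoc]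

lemma configs_nonempty {m r n d : ℕ} (hmn : m * r = d * n) : (configs m r n d).Nonempty := by
  have e : Fin m × Fin r ≃ Fin n × Fin d :=
    Fintype.equivOfCardEq (by simp [hmn, mul_comm])
  refine ⟨fun p => (e p).1, mem_configs.2 fun v => ?_⟩
  have : (univ : Finset (Fin d)).card = d := by simp
  conv_rhs => rw [← this]
  symm
  refine Finset.card_bij (fun a _ => e.symm (v, a)) ?_ ?_ ?_
  · intro a _; simp
  · intro a _ b _ h; simpa using h
  · intro p hp
    simp only [Finset.mem_filter, Finset.mem_univ, true_and] at hp
    exact ⟨(e p).2, Finset.mem_univ _, by rw [← hp]; simp⟩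

/-- First moment bound, over hypergraphs: passing from configurations to simple ones costs only
a polynomial factor. -/
lemma card_indep_family {m r n d s : ℕ} (hr : 3 ≤ r) (hm : r * (d * (r * d)) < m)
    (hmn : m * r = d * n) (z : ℝ) (hz : 0 < z) :
    (((regularFamily n r d).filter
      (fun E => ∃ S : Finset (Fin n), S.card = s ∧ IndepSet E S)).card : ℝ)
        * ((d * n).choose (d * s) : ℝ) * z ^ (d * s)
      ≤ (n.choose s : ℝ) * ((z + 1) ^ r - z ^ r) ^ m *
        (2 * (((d * n : ℝ) ^ 2) ^ (2 * (r * d + 3 * d ^ 2)) * (regularFamily n r d).card)) := by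
  set W := m.factorial * r.factorial ^ m with hW
  have hWpos : (0 : ℝ) < W := by
    have : 0 < W := Nat.mul_pos (Nat.factorial_pos _) (pow_pos (Nat.factorial_pos _) _)
    exact_mod_cast this
  have hQ : 0 ≤ (z + 1) ^ r - z ^ r := sub_nonneg.2 (pow_le_pow_left₀ hz.le (by linarith) _)
  have h1 := card_indep_configs (m := m) (r := r) (n := n) (d := d) (s := s) z hz
  have h2 : (((simpleConfigs m r n d).filter
      (fun f => ∃ S : Finset (Fin n), S.card = s ∧ IndepSet (edges f) S)).card : ℝ)
      ≤ (((configs m r n d).filter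
      (fun f => ∃ S : Finset (Fin n), S.card = s ∧ IndepSet (edges f) S)).card : ℝ) := by
    exact_mod_cast Finset.card_le_card (Finset.filter_subset_filter _ (Finset.filter_subset _ _))
  have h5 : ((simpleConfigs m r n d).filter
      (fun f => ∃ S : Finset (Fin n), S.card = s ∧ IndepSet (edges f) S)).card
      = ((regularFamily n r d).filter
        (fun E => ∃ S : Finset (Fin n), S.card = s ∧ IndepSet E S)).card * W := by
    convert card_simple_filter (by omega) hmn
      (fun E => ∃ S : Finset (Fin n), S.card = s ∧ IndepSet E S)
  rw [h5, hW] at h2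
  have h3 := (card_configs_le (n := n) hr hm).trans (Nat.mul_le_mul_left 2
    (Nat.mul_le_mul_left _ (Finset.card_le_card (defects_zero_subset (d := d)))))
  have h4 := card_simple_filter (d := d) (n := n) (by omega : 0 < r) hmn (fun _ => True)
  simp only [Finset.filter_true] at h4
  rw [h4, hmn] at h3
  have h3' : ((configs m r n d).card : ℝ) ≤ 2 * (((d * n : ℝ) ^ 2) ^ (2 * (r * d + 3 * d ^ 2)) *
      ((regularFamily n r d).card * W)) := by exact_mod_cast h3
  rw [hmn] at h1
  push_cast at h2
  rw [hW] at hWpos h3'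
  push_cast at hWpos h3'
  refine le_of_mul_le_mul_right ?_ hWpos
  calc _ = (((regularFamily n r d).filter
      (fun E => ∃ S : Finset (Fin n), S.card = s ∧ IndepSet E S)).card : ℝ) *
        ((m.factorial : ℝ) * (r.factorial : ℝ) ^ m) *
        ((d * n).choose (d * s) : ℝ) * z ^ (d * s) := by ring
    _ ≤ _ := mul_le_mul_of_nonneg_right (mul_le_mul_of_nonneg_right h2 (Nat.cast_nonneg _))
        (by positivity)
    _ ≤ _ := h1
    _ ≤ _ := mul_le_mul_of_nonneg_left h3' (by positivity)
    _ = _ := by ring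

lemma regularFamily_nonempty {m r n d : ℕ} (hr : 3 ≤ r) (hm : r * (d * (r * d)) < m)
    (hmn : m * r = d * n) : 0 < (regularFamily n r d).card := by
  have h3 := (card_configs_le (n := n) hr hm).trans (Nat.mul_le_mul_left 2
    (Nat.mul_le_mul_left _ (Finset.card_le_card (defects_zero_subset (d := d)))))
  have h4 := Finset.card_pos.2 (configs_nonempty hmn)
  by_contra hcon
  have h5 : regularFamily n r d = ∅ := Finset.card_eq_zero.1 (by omega)
  have h6 : simpleConfigs m r n d = ∅ := by
    refine Finset.eq_empty_of_forall_notMem fun f hf => ?_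
    have := edges_mem hf
    rw [h5] at this
    simp at this
  rw [h6, Finset.card_empty, mul_zero, mul_zero] at h3
  omega

/-! ### Binomial estimates and the exponential rate -/

/-- The mode `s` of the binomial distribution with parameters `n`, `c` is within `1` of `c * n`
and has probability at least `1 / (n + 1)`. -/
lemma exists_mode (c : ℝ) (hc0 : 0 < c) (hc1 : c < 1) (n : ℕ) :
    ∃ s ≤ n, (s : ℝ) ≤ c * (n + 1) ∧ c * (n + 1) - 1 ≤ s ∧
      1 ≤ (n + 1) * ((n.choose s : ℝ) * (c ^ s * (1 - c) ^ (n - s))) := by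
  have hc1' : 0 < 1 - c := by linarith
  let t : ℕ → ℝ := fun k => (n.choose k : ℝ) * (c ^ k * (1 - c) ^ (n - k))
  obtain ⟨s, hs, hmax⟩ := Finset.exists_max_image (range (n + 1)) t ⟨0, by simp⟩
  have hsn : s ≤ n := by have := Finset.mem_range.1 hs; omega
  have hratio : ∀ k, k < n → ∃ w > 0, t k * (k + 1) = (n.choose k * w) * ((1 - c) * (k + 1)) ∧
      t (k + 1) * (k + 1) = (n.choose k * w) * (c * (n - k)) := by
    intro k hk
    refine ⟨c ^ k * (1 - c) ^ (n - (k + 1)), by positivity, ?_, ?_⟩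
    · have : n - k = n - (k + 1) + 1 := by omega
      simp only [t]
      rw [this, pow_succ]; ring
    · have h := Nat.choose_succ_right_eq n k
      have h' : (n.choose (k + 1) : ℝ) * (k + 1) = n.choose k * (n - k) := by
        rw [← Nat.cast_sub hk.le]; exact_mod_cast h
      simp only [t]
      rw [pow_succ]
      linear_combination (c ^ k * c * (1 - c) ^ (n - (k + 1))) * h'
  refine ⟨s, hsn, ?_, ?_, ?_⟩
  · rcases Nat.eq_zero_or_pos s with rfl | hpos
    · simp; positivity
    · obtain ⟨k, rfl⟩ : ∃ k, s = k + 1 := ⟨s - 1, by omega⟩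
      obtain ⟨w, hw, h1, h2⟩ := hratio k (by omega)
      have h3 : t k * (k + 1) ≤ t (k + 1) * (k + 1) :=
        mul_le_mul_of_nonneg_right (hmax k (Finset.mem_range.2 (by omega))) (by positivity)
      have hpos : (0 : ℝ) < n.choose k * w :=
        mul_pos (Nat.cast_pos.2 (Nat.choose_pos (by omega))) hw
      rw [h1, h2] at h3
      have := le_of_mul_le_mul_left h3 hpos
      push_cast
      linarith
  · rcases Nat.lt_or_ge s n with hlt | hge
    · obtain ⟨w, hw, h1, h2⟩ := hratio s hlt
      have h3 : t (s + 1) * (s + 1) ≤ t s * (s + 1) :=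
        mul_le_mul_of_nonneg_right (hmax (s + 1) (Finset.mem_range.2 (by omega))) (by positivity)
      have hpos : (0 : ℝ) < n.choose s * w :=
        mul_pos (Nat.cast_pos.2 (Nat.choose_pos (by omega))) hw
      rw [h1, h2] at h3
      have := le_of_mul_le_mul_left h3 hpos
      linarith
    · obtain rfl : s = n := by omega
      have : (0 : ℝ) ≤ s := Nat.cast_nonneg _
      nlinarith
  · have hsum : ∑ k ∈ range (n + 1), t k = 1 := by
      have := add_pow c (1 - c) n
      rw [add_sub_cancel, one_pow] at this
      rw [this]
      exact Finset.sum_congr rfl fun k _ => by simp only [t]; ring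
    have h := Finset.sum_le_card_nsmul (range (n + 1)) t (t s) hmax
    rw [hsum, Finset.card_range, nsmul_eq_mul] at h
    push_cast at h
    exact h

lemma choose_pow_le (n s d : ℕ) : n.choose s ^ d ≤ (d * n).choose (d * s) := by
  induction d with
  | zero => simp
  | succ d ih =>
    rw [pow_succ, Nat.succ_mul, Nat.succ_mul, Nat.add_choose_eq]
    refine (Nat.mul_le_mul_right _ ih).trans ?_
    exact Finset.single_le_sum (f := fun ij : ℕ × ℕ => (d * n).choose ij.1 * n.choose ij.2)
      (fun _ _ => Nat.zero_le _) (a := (d * s, s)) (by simp)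

lemma exists_indep_of_le {n s : ℕ} {c : ℝ} (hn : 0 < c * n) (hs : (s : ℝ) < c * n + 1)
    {E : Finset (Finset (Fin n))} (hE : ¬ (independenceNumber E : ℝ) < c * n) :
    ∃ S : Finset (Fin n), S.card = s ∧ IndepSet E S := by
  set X := {s : ℕ | ∃ S : Finset (Fin n), S.card = s ∧ IndepSet E S} with hX
  have hdef : independenceNumber E = sSup X := rfl
  have hne : X.Nonempty := by
    by_contra h
    rw [Set.not_nonempty_iff_eq_empty] at h
    rw [hdef, h] at hE
    simp at hE
    linarith
  have hbdd : BddAbove X := by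
    refine ⟨n, ?_⟩
    rintro k ⟨S, rfl, -⟩
    simpa using Finset.card_le_univ S
  obtain ⟨S, hS, hI⟩ := Nat.sSup_mem hne hbdd
  rw [← hdef] at hS
  push Not at hE
  have hle : s ≤ S.card := by
    have : (s : ℝ) < (S.card : ℝ) + 1 := by rw [hS]; linarith
    have : s < S.card + 1 := by exact_mod_cast this
    omega
  obtain ⟨S', hsubset, hc⟩ := Finset.exists_subset_card_eq hle
  exact ⟨S', hc, fun e he hsub => hI e he (hsub.trans hsubset)⟩

/-- The first moment in exponential form, at the mode `s`. The exponent is linear in `s`, so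
replacing `s` by `c * n` costs a bounded factor. -/
lemma exp_bound {r d m n s : ℕ} (hr : 3 ≤ r) (hd : 1 ≤ d) (hmn : m * r = d * n) {c z Q : ℝ}
    (hc0 : 0 < c) (hc1 : c < 1) (hz : 0 < z) (hQ : 0 < Q) (hsn : s ≤ n)
    (h1 : (s : ℝ) ≤ c * (n + 1)) (h2 : c * (n + 1) - 1 ≤ s)
    (h3 : 1 ≤ (n + 1) * ((n.choose s : ℝ) * (c ^ s * (1 - c) ^ (n - s)))) :
    (n.choose s : ℝ) * Q ^ m ≤ (n + 1) ^ (d - 1)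
      * exp (|(d - 1) * (log c - log (1 - c)) - d * log z|)
      * exp (n * ((d - 1) * (c * log c + (1 - c) * log (1 - c)) + d / r * log Q - d * c * log z))
      * (((d * n).choose (d * s) : ℝ) * z ^ (d * s)) := by
  have hc1' : 0 < 1 - c := by linarith
  have hr0 : (r : ℝ) ≠ 0 := by positivity
  have hCpos : (0 : ℝ) < n.choose s := Nat.cast_pos.2 (Nat.choose_pos hsn)
  obtain ⟨e, rfl⟩ : ∃ e, d = e + 1 := ⟨d - 1, by omega⟩
  simp only [Nat.add_sub_cancel]
  set w := c ^ s * (1 - c) ^ (n - s) with hw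
  have hwpos : 0 < w := by positivity
  have hpow : ((n.choose s : ℝ)) ^ (e + 1) ≤ (((e + 1) * n).choose ((e + 1) * s) : ℝ) := by
    exact_mod_cast choose_pow_le n s (e + 1)
  have hm : (m : ℝ) = (e + 1) * n / r := by
    rw [eq_div_iff hr0]; exact_mod_cast hmn
  -- the exponential form of `w ^ e * Q ^ m / z ^ (d * s)`
  have hexp : w ^ e * Q ^ m = exp (e * (s * log c + (n - s) * log (1 - c)) + m * log Q
      - (e + 1) * s * log z) * z ^ ((e + 1) * s) := by
    rw [← Real.exp_log (by positivity : 0 < w ^ e * Q ^ m),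
      ← Real.exp_log (by positivity : 0 < z ^ ((e + 1) * s)), ← Real.exp_add]
    congr 1
    rw [Real.log_mul (by positivity) (by positivity), Real.log_pow, Real.log_pow, Real.log_pow,
      hw, Real.log_mul (by positivity) (by positivity), Real.log_pow, Real.log_pow,
      Nat.cast_sub hsn]
    push_cast
    ring
  have hle : e * (s * log c + (n - s) * log (1 - c)) + m * log Q - (e + 1) * s * log z
      ≤ |(((e + 1 : ℕ) : ℝ) - 1) * (log c - log (1 - c)) - ((e + 1 : ℕ) : ℝ) * log z|
        + n * ((((e + 1 : ℕ) : ℝ) - 1) * (c * log c + (1 - c) * log (1 - c))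
          + ((e + 1 : ℕ) : ℝ) / r * log Q - ((e + 1 : ℕ) : ℝ) * c * log z) := by
    set Y := (((e + 1 : ℕ) : ℝ) - 1) * (log c - log (1 - c)) - ((e + 1 : ℕ) : ℝ) * log z with hY
    have habs : |(s : ℝ) - c * n| ≤ 1 := abs_le.2 ⟨by linarith, by linarith⟩
    have hYle : (s - c * n) * Y ≤ |Y| := by
      calc (s - c * n) * Y ≤ |(s - c * n) * Y| := le_abs_self _
        _ = |s - c * n| * |Y| := abs_mul _ _
        _ ≤ 1 * |Y| := mul_le_mul_of_nonneg_right habs (abs_nonneg _)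
        _ = |Y| := one_mul _
    refine le_trans (le_of_eq ?_) (add_le_add_left hYle _)
    rw [hm, hY]
    push_cast
    field_simp
    ring
  have hexple := Real.exp_le_exp.2 hle
  rw [Real.exp_add] at hexple
  calc (n.choose s : ℝ) * Q ^ m
      ≤ (n.choose s : ℝ) * Q ^ m * ((n + 1) * ((n.choose s : ℝ) * w)) ^ e :=
        le_mul_of_one_le_right (by positivity) (one_le_pow₀ h3)
    _ = (n + 1) ^ e * (w ^ e * Q ^ m) * (n.choose s : ℝ) ^ (e + 1) := by
        rw [mul_pow, mul_pow]; ring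
    _ ≤ (n + 1) ^ e * (w ^ e * Q ^ m) * (((e + 1) * n).choose ((e + 1) * s) : ℝ) :=
        mul_le_mul_of_nonneg_left hpow (by positivity)
    _ = (n + 1) ^ e * exp (e * (s * log c + (n - s) * log (1 - c)) + m * log Q
      - (e + 1) * s * log z) * ((((e + 1) * n).choose ((e + 1) * s) : ℝ) * z ^ ((e + 1) * s)) := by
        rw [hexp]; ring
    _ ≤ _ := by
        refine mul_le_mul_of_nonneg_right ?_ (by positivity)
        rw [mul_assoc (((n : ℝ) + 1) ^ e) (exp |_|)]
        exact mul_le_mul_of_nonneg_left hexple (by positivity)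

/-- Claim 4.2 of Bal–Bennett: if the entropy-type expression is negative then
w.h.p. `α(H_r(n,d)) < c·n`. -/
theorem independence_number_upper_bound_criterion
    (r d : ℕ) (hr : 3 ≤ r) (hd : 2 ≤ d) (c : ℝ) (hc0 : 0 < c) (hc1 : c < ((r : ℝ) - 1) / r)
    (z₂ : ℝ) (hz₂pos : 0 < z₂)
    (hz₂ : z₂ * ((z₂ + 1) ^ (r - 1) - z₂ ^ (r - 1)) / ((z₂ + 1) ^ r - z₂ ^ r) = c)
    (z₁ : ℝ) (hz₁ : z₁ = (d : ℝ) / (r * ((z₂ + 1) ^ r - z₂ ^ r)))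
    (h : ℝ → ℝ) (hh : ∀ x : ℝ, h x = x * Real.log x)
    (hneg : h ((d : ℝ) / r) + h (d * c) + h (d * (1 - c)) - h c - h (1 - c) - h d
        - ((d : ℝ) / r) * Real.log z₁ - d * c * Real.log z₂ < 0) :
    Filter.Tendsto
      (fun n : ℕ =>
        uniformProb (regularFamily n r d)
          (fun E => (independenceNumber E : ℝ) < c * n))
      (Filter.atTop ⊓ Filter.principal {n : ℕ | r ∣ d * n}) (nhds 1) := by
  have hr0 : (0 : ℝ) < r := by positivity
  have hd0 : (0 : ℝ) < d := by positivity
  have hc1' : c < 1 := hc1.trans (by rw [div_lt_one hr0]; linarith)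
  have hc2 : 0 < 1 - c := by linarith
  set Q : ℝ := (z₂ + 1) ^ r - z₂ ^ r with hQdef
  have hQ : 0 < Q := sub_pos.2 (pow_lt_pow_left₀ (by linarith) hz₂pos.le (by omega))
  set X : ℝ := (d - 1) * (c * log c + (1 - c) * log (1 - c)) + d / r * log Q - d * c * log z₂
    with hX
  -- the terms in `d / r` and in `log d` cancel
  have hXneg : X < 0 := by
    refine lt_of_eq_of_lt ?_ hneg
    simp only [hh]
    rw [hz₁, ← div_div, Real.log_div (by positivity) hQ.ne', Real.log_mul hd0.ne' hc0.ne',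
      Real.log_mul hd0.ne' hc2.ne', hX]
    ring
  set M : ℕ := 2 * (2 * (r * d + 3 * d ^ 2)) with hM
  set Y : ℝ := |(d - 1) * (log c - log (1 - c)) - d * log z₂| with hY
  set C : ℝ := 2 * d ^ M * exp Y * exp (-X) with hC
  have hlim : Tendsto (fun n : ℕ => 1 - C * ((n + 1 : ℝ) ^ (M + (d - 1)) * exp X ^ (n + 1)))
      atTop (nhds 1) := by
    have h1 := tendsto_pow_const_mul_const_pow_of_abs_lt_one (M + (d - 1)) (r := exp X)
      (by rw [abs_of_pos (exp_pos _)]; simpa using hXneg)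
    have h2 := (tendsto_add_atTop_iff_nat 1).2 h1
    have h3 := (h2.const_mul C).const_sub 1
    simpa using h3
  refine tendsto_of_tendsto_of_tendsto_of_le_of_le' (hlim.mono_left inf_le_left)
    tendsto_const_nhds ?_ ?_
  · rw [eventually_inf_principal]
    filter_upwards [eventually_gt_atTop (r * (d * (r * d)) * r)] with n hn hdiv
    obtain ⟨m, hm⟩ := hdiv
    have hmn : m * r = d * n := by rw [hm, mul_comm]
    have hmlarge : r * (d * (r * d)) < m := by
      refine lt_of_mul_lt_mul_right (a := r) ?_ (Nat.zero_le _)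
      rw [hmn]; nlinarith
    have hn0 : 0 < n := by omega
    have hn0' : (0 : ℝ) < n := by exact_mod_cast hn0
    obtain ⟨s, hsn, hs1, hs2, hs3⟩ := exists_mode c hc0 hc1' n
    have hRpos : (0 : ℝ) < (regularFamily n r d).card := by
      exact_mod_cast regularFamily_nonempty hr hmlarge hmn
    have hfm := card_indep_family (s := s) hr hmlarge hmn z₂ hz₂pos
    have heb := exp_bound hr (by omega : 1 ≤ d) hmn hc0 hc1' hz₂pos hQ hsn hs1 hs2 hs3
    rw [← hX, ← hY] at heb
    set B := (regularFamily n r d).filter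
      (fun E => ∃ S : Finset (Fin n), S.card = s ∧ IndepSet E S) with hB
    have hD : (0 : ℝ) < ((d * n).choose (d * s) : ℝ) * z₂ ^ (d * s) :=
      mul_pos (Nat.cast_pos.2 (Nat.choose_pos (Nat.mul_le_mul_left d hsn))) (pow_pos hz₂pos _)
    have hBle : (B.card : ℝ) ≤
        C * ((n + 1 : ℝ) ^ (M + (d - 1)) * exp X ^ (n + 1)) * (regularFamily n r d).card := by
      refine le_of_mul_le_mul_right ?_ hD
      rw [← mul_assoc]
      have hpoly : ((d * n : ℝ) ^ 2) ^ (2 * (r * d + 3 * d ^ 2)) ≤ d ^ M * (n + 1) ^ M := by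
        rw [← pow_mul, ← hM, mul_pow]
        gcongr
        linarith
      have hexpn : exp (n * X) = exp (-X) * exp X ^ (n + 1) := by
        rw [← Real.exp_nat_mul, ← Real.exp_add]
        congr 1
        push_cast; ring
      calc _ ≤ _ := hfm
        _ ≤ _ := mul_le_mul_of_nonneg_right heb (by positivity)
        _ ≤ ((n + 1) ^ (d - 1) * exp Y * exp (n * X)
            * (((d * n).choose (d * s) : ℝ) * z₂ ^ (d * s))) *
            (2 * ((d ^ M * (n + 1) ^ M) * (regularFamily n r d).card)) := by gcongr
        _ = _ := by rw [hexpn, hC, pow_add]; ring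
    have hsplit := Finset.card_filter_add_card_filter_not (s := regularFamily n r d)
      (fun E => (independenceNumber E : ℝ) < c * n)
    have hsub : (regularFamily n r d).filter (fun E => ¬ (independenceNumber E : ℝ) < c * n)
        ⊆ B := by
      intro E hE
      obtain ⟨hE1, hE2⟩ := Finset.mem_filter.1 hE
      exact Finset.mem_filter.2 ⟨hE1, exists_indep_of_le (by positivity) (by linarith) hE2⟩
    have hcard : ((regularFamily n r d).card : ℝ) ≤ (((regularFamily n r d).filter
        (fun E => (independenceNumber E : ℝ) < c * n)).card : ℝ) + B.card := by
      have := Finset.card_le_card hsub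
      exact_mod_cast (by omega : (regularFamily n r d).card ≤ ((regularFamily n r d).filter
        (fun E => (independenceNumber E : ℝ) < c * n)).card + B.card)
    unfold uniformProb
    rw [le_div_iff₀ hRpos]
    linarith
  · filter_upwards with n
    unfold uniformProb
    exact div_le_one_of_le₀ (by exact_mod_cast Finset.card_filter_le _ _) (Nat.cast_nonneg _)
end

section
/- For every integer r ≥ 3 and every real number c with 0 < c < (r−1)/r, there exists a unique positive real number z such that z((z+1)^{r−1} − z^{r−1})/((z+1)^r − z^r) = c. -/
/-!
Put `t = z / (z + 1)`, which maps the positive reals bijectively onto `(0, 1)`. Since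
`z ((z+1)^(r-1) - z^(r-1)) = ((z+1)^r - z^r) - (z+1)^(r-1)` and
`(z+1)^r - z^r = (z+1)^(r-1) (1 + t + ⋯ + t^(r-1))`, the left-hand side of the equation equals
`1 - 1 / S(t)` with `S(t) = 1 + t + ⋯ + t^(r-1)` (`ratio_eq`). The equation is therefore
`S(t) = 1 / (1 - c)`, where `1 < 1 / (1 - c) < r`. As `S` is continuous and strictly increasing on
`[0, 1]` with `S(0) = 1` and `S(1) = r`, there is exactly one such `t`.
-/

open Finset in
lemma ratio_eq (n : ℕ) (z : ℝ) (hz : 0 < z) :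
    z * ((z + 1) ^ n - z ^ n) / ((z + 1) ^ (n + 1) - z ^ (n + 1))
      = 1 - (∑ i ∈ range (n + 1), (z / (z + 1)) ^ i)⁻¹ := by
  set t := z / (z + 1) with ht
  have hz1 : 0 < z + 1 := by linarith
  have ht0 : 0 < t := by positivity
  have hzt : z = t * (z + 1) := (div_mul_cancel₀ z hz1.ne').symm
  clear_value t
  have hS : 0 < ∑ i ∈ range (n + 1), t ^ i :=
    sum_pos (fun i _ => pow_pos ht0 i) nonempty_range_add_one
  have hg := geom_sum_mul t (n + 1)
  have hpow : z ^ (n + 1) = t ^ (n + 1) * (z + 1) ^ (n + 1) := by rw [← mul_pow, ← hzt]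
  have hG : (z + 1) ^ (n + 1) - z ^ (n + 1)
      = (z + 1) ^ n * ∑ i ∈ range (n + 1), t ^ i := by
    have h1 : (z + 1) * (1 - t) = 1 := by linarith
    calc (z + 1) ^ (n + 1) - z ^ (n + 1)
        = (z + 1) ^ (n + 1) * (1 - t ^ (n + 1)) := by rw [hpow]; ring
      _ = (z + 1) ^ n * ((z + 1) * (1 - t)) * ∑ i ∈ range (n + 1), t ^ i := by
          linear_combination ((z + 1) ^ (n + 1)) * hg
      _ = _ := by rw [h1, mul_one]
  have hN : z * ((z + 1) ^ n - z ^ n)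
      = ((z + 1) ^ (n + 1) - z ^ (n + 1)) - (z + 1) ^ n := by ring
  have hP : 0 < (z + 1) ^ n := by positivity
  rw [hN, hG, sub_div, div_self (mul_pos hP hS).ne', div_mul_cancel_left₀ hP.ne']

open Finset in
lemma geom_sum_strictMonoOn (n : ℕ) (hn : 1 ≤ n) :
    StrictMonoOn (fun t : ℝ => ∑ i ∈ range (n + 1), t ^ i) (Set.Ici 0) := by
  intro a ha b _ hab
  refine sum_lt_sum (fun i _ => pow_le_pow_left₀ ha hab.le i) ⟨1, ?_, by simpa using hab⟩
  simp only [mem_range]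
  omega

/-- For every integer `r ≥ 3` and every real `c` with `0 < c < (r−1)/r`, there is a unique
positive real `z` with `z((z+1)^(r−1) − z^(r−1))/((z+1)^r − z^r) = c`. -/
theorem exists_unique_z (r : ℕ) (hr : 3 ≤ r) (c : ℝ) (hc0 : 0 < c)
    (hc1 : c < ((r : ℝ) - 1) / r) :
    ∃! z : ℝ, 0 < z ∧ z * ((z + 1) ^ (r - 1) - z ^ (r - 1)) / ((z + 1) ^ r - z ^ r) = c := by
  obtain ⟨n, rfl⟩ : ∃ n, r = n + 1 := ⟨r - 1, by omega⟩
  simp only [Nat.add_sub_cancel]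
  have hr0 : (0 : ℝ) < ((n + 1 : ℕ) : ℝ) := by positivity
  rw [lt_div_iff₀ hr0] at hc1
  have hc : c < 1 := by nlinarith
  have hmono := geom_sum_strictMonoOn n (by omega)
  have hcont : ContinuousOn (fun t : ℝ => ∑ i ∈ Finset.range (n + 1), t ^ i) (Set.Icc 0 1) := by
    fun_prop
  have h0 : (fun t : ℝ => ∑ i ∈ Finset.range (n + 1), t ^ i) 0 = 1 := by
    simp [Finset.sum_range_succ']
  have h1 : (fun t : ℝ => ∑ i ∈ Finset.range (n + 1), t ^ i) 1 = ((n + 1 : ℕ) : ℝ) := by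
    simp
  have hmem : (1 - c)⁻¹ ∈ Set.Ioo ((fun t : ℝ => ∑ i ∈ Finset.range (n + 1), t ^ i) 0)
      ((fun t : ℝ => ∑ i ∈ Finset.range (n + 1), t ^ i) 1) := by
    rw [h0, h1]
    have h : 0 < 1 - c := by linarith
    constructor
    · rw [lt_inv_comm₀ one_pos h]; linarith
    · rw [inv_lt_iff_one_lt_mul₀ h]; linarith
  obtain ⟨t, ⟨ht0, ht1⟩, ht⟩ := intermediate_value_Ioo zero_le_one hcont hmem
  have hs : 0 < 1 - t := by linarith
  refine ⟨t / (1 - t), ⟨by positivity, ?_⟩, ?_⟩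
  · have hinv : t / (1 - t) / (t / (1 - t) + 1) = t := by
      field_simp
      ring
    rw [ratio_eq n _ (by positivity), hinv]
    simp only at ht
    rw [ht, inv_inv]
    ring
  · rintro y ⟨hy, hyc⟩
    rw [ratio_eq n y hy] at hyc
    have hS : ∑ i ∈ Finset.range (n + 1), (y / (y + 1)) ^ i = (1 - c)⁻¹ := by
      rw [← hyc, sub_sub_cancel, inv_inv]
    have hyt : y / (y + 1) = t :=
      hmono.injOn (show (0 : ℝ) ≤ y / (y + 1) by positivity) ht0.le (hS.trans ht.symm)
    rw [div_eq_iff (by positivity)] at hyt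
    rw [eq_div_iff hs.ne']
    linarith
end

section
/- Fix an integer r ≥ 3. There exist constants C > 0 and c₀ > 0 (depending only on r) such that for every real number c with 0 < c < c₀, the unique positive real number z₂ satisfying z₂((z₂+1)^{r−1} − z₂^{r−1})/((z₂+1)^r − z₂^r) = c satisfies |z₂ − c/(1−c)| ≤ C·c^r. -/
/-!
Put `a = (z₂ + 1)^(r-1)` and `b = z₂^(r-1)`. The equation gives
`1 - c = a / ((z₂ + 1) a - z₂ b)`, hence `c / (1 - c) = z₂ (a - b) / a`, so the error is exactly
`z₂ - c / (1 - c) = z₂^r / (z₂ + 1)^(r-1) ≤ z₂^r`. Since `(z₂ + 1) b ≤ z₂ a`, the equation also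
gives `z₂ ≤ c (2 z₂ + 1)`, so `z₂ ≤ 2 c` when `c < 1/4`. Thus `C = 2^r` and `c₀ = 1/4` work.
-/

/-- Fix an integer `r ≥ 3`. There are constants `C > 0` and `c₀ > 0` such that for every
`0 < c < c₀`, the unique positive real `z₂` with
`z₂((z₂+1)^(r−1) − z₂^(r−1))/((z₂+1)^r − z₂^r) = c` satisfies `|z₂ − c/(1−c)| ≤ C·c^r`. -/
theorem z_two_estimate (r : ℕ) (hr : 3 ≤ r) :
    ∃ C : ℝ, 0 < C ∧ ∃ c₀ : ℝ, 0 < c₀ ∧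
      ∀ c : ℝ, 0 < c → c < c₀ →
        ∀ z₂ : ℝ, 0 < z₂ →
          z₂ * ((z₂ + 1) ^ (r - 1) - z₂ ^ (r - 1)) / ((z₂ + 1) ^ r - z₂ ^ r) = c →
          |z₂ - c / (1 - c)| ≤ C * c ^ r := by
  refine ⟨2 ^ r, by positivity, 1 / 4, by norm_num, ?_⟩
  intro c hc hc4 z hz h
  obtain ⟨k, rfl⟩ : ∃ k, r = k + 3 := ⟨r - 3, by omega⟩
  have hk : k + 3 - 1 = k + 2 := by omega
  rw [hk] at h
  have hD : 0 < (z + 1) ^ (k + 3) - z ^ (k + 3) :=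
    sub_pos.2 (pow_lt_pow_left₀ (by linarith) hz.le (by omega))
  have hab : z * (z + 1) * z ^ (k + 1) ≤ z * (z + 1) * (z + 1) ^ (k + 1) :=
    mul_le_mul_of_nonneg_left (pow_le_pow_left₀ hz.le (by linarith) _) (by positivity)
  have ha1 : 1 ≤ (z + 1) ^ (k + 2) := one_le_pow₀ (by linarith)
  have ha : 0 < (z + 1) ^ (k + 2) := by positivity
  have hc1 : 0 < 1 - c := by linarith
  have key : z - c / (1 - c) = z ^ (k + 3) / (z + 1) ^ (k + 2) := by
    rw [div_eq_iff hD.ne'] at h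
    rw [sub_eq_iff_eq_add, ← sub_eq_iff_eq_add', eq_div_iff hc1.ne']
    field_simp
    linear_combination h
  have hz2 : z ≤ 2 * c := by
    have h1 : z / (2 * z + 1) ≤ c := by
      rw [← h, div_le_div_iff₀ (by positivity) hD]
      have h2 : (z + 1) ^ (k + 3) - z ^ (k + 3)
          ≤ ((z + 1) ^ (k + 2) - z ^ (k + 2)) * (2 * z + 1) := by
        linear_combination hab
      calc _ ≤ z * (((z + 1) ^ (k + 2) - z ^ (k + 2)) * (2 * z + 1)) :=
            mul_le_mul_of_nonneg_left h2 hz.le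
        _ = _ := by ring
    rw [div_le_iff₀ (by positivity)] at h1
    nlinarith
  rw [key, abs_of_nonneg (by positivity), ← mul_pow]
  exact (div_le_self (by positivity) ha1).trans (pow_le_pow_left₀ hz.le hz2 _)
end

section
/- For every integer r ≥ 3 and every ε > 0 there exists d₀ = d₀(r, ε) such that for every real d ≥ d₀ the following holds. Let c := (1+ε)(r log d/((r−1)d))^{1/(r−1)}, let z₂ be the unique positive real number satisfying z₂((z₂+1)^{r−1} − z₂^{r−1})/((z₂+1)^r − z₂^r) = c, let z₁ := d/(r((z₂+1)^r − z₂^r)), and let h(x) := x log x. Then h(d/r) + h(dc) + h(d(1−c)) − h(c) − h(1−c) − h(d) − (d/r) log z₁ − dc log z₂ < 0. -/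
/-!
Put `n = r - 1`, `z = z₂`, `y = z / (z + 1)` and `H(c) = -c log c - (1 - c) log (1 - c)`. The
equation for `z` becomes `c = y (1 - y ^ n) / (1 - y ^ r)` and `1 - c = (1 - y) / (1 - y ^ r)`.
Substituting, the expression collapses to
`H(c) + d (c log (1 - y ^ n) - (1 - 1 / r) log (1 - y ^ r))`.
Since `log (1 - y ^ n) ≤ -y ^ n` and `-log (1 - y ^ r) ≤ y ^ r / (1 - y ^ r)`, the factor of `d` is
at most `-(y ^ r / (1 - y ^ r)) (1 / r - y ^ n)`. As `c ≤ y ≤ 2 c` and `H(c) ≤ c (1 - log c)`,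
it suffices that `1 - log c < d c ^ n (1 / r - (2 c) ^ n)`: this reduction is
`entropy_neg_of_bound`.

For large `d` the last inequality holds because
`d c ^ n = (1 + ε) ^ n r log d / n` while `-log c = (log d - log (d c ^ n)) / n`, so that the right
side is about `(1 + ε) ^ n log d / n` and the left side is at most `log d / n`: this is
`eventually_bound`.
-/

open Filter Topology

/-- The parametrization by `y = z / (z + 1)` gives `c ≤ y ≤ 2 c`. -/
lemma y_bounds (n : ℕ) (hn : 2 ≤ n) (y c : ℝ) (hy0 : 0 < y) (hy1 : y < 1)
    (hc : c * (1 - y ^ (n + 1)) = y * (1 - y ^ n)) : 0 < c ∧ c ≤ y ∧ y ≤ 2 * c := by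
  have ht0 : 0 < y ^ n := pow_pos hy0 n
  have hty : y ^ n ≤ y := pow_le_of_le_one hy0.le hy1.le (by omega)
  rw [pow_succ] at hc
  have hpos : 0 < 1 - y ^ n * y := by nlinarith
  refine ⟨?_, ?_, ?_⟩
  · exact pos_of_mul_pos_left (hc ▸ mul_pos hy0 (by linarith)) hpos.le
  · refine le_of_mul_le_mul_right ?_ hpos
    rw [hc]
    nlinarith [mul_pos hy0 ht0, mul_pos (mul_pos hy0 ht0) (sub_pos.2 hy1)]
  · refine le_of_mul_le_mul_right ?_ hpos
    -- the claim reduces to `1 + y ^ (n + 1) ≥ 2 y ^ n`, which follows from `(1 - y ^ n) ^ 2 ≥ 0`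
    have h1 : 0 ≤ 1 + y ^ n * y - 2 * y ^ n := by nlinarith [sq_nonneg (1 - y ^ n)]
    nlinarith [mul_nonneg hy0.le h1]

lemma neg_entropy_lower (c : ℝ) (hc1 : c < 1) :
    -c ≤ (1 - c) * Real.log (1 - c) := by
  have h := Real.one_sub_inv_le_log_of_pos (sub_pos.2 hc1)
  have h2 := mul_le_mul_of_nonneg_left h (sub_pos.2 hc1).le
  have h3 : (1 - c) * (1 - (1 - c)⁻¹) = -c := by
    have : (1 - c) ≠ 0 := (sub_pos.2 hc1).ne'
    field_simp
    ring
  linarith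

/-- Upper bound for the factor of `d` in the collapsed expression. -/
lemma factor_bound (n : ℕ) (hn : 2 ≤ n) (y c : ℝ) (hy0 : 0 < y) (hy1 : y < 1)
    (hc : c * (1 - y ^ (n + 1)) = y * (1 - y ^ n))
    (hq : 0 ≤ 1 / ((n : ℝ) + 1) - (2 * c) ^ n) :
    c * Real.log (1 - y ^ n) - (1 - 1 / ((n : ℝ) + 1)) * Real.log (1 - y ^ (n + 1))
      ≤ -(c ^ (n + 1) * (1 / ((n : ℝ) + 1) - (2 * c) ^ n)) := by
  obtain ⟨hc0, hcy, hyc⟩ := y_bounds n hn y c hy0 hy1 hc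
  have ht0 : 0 < y ^ n := pow_pos hy0 n
  have ht1 : y ^ n < 1 := pow_lt_one₀ hy0.le hy1 (by omega)
  have hs0 : 0 < y ^ (n + 1) := pow_pos hy0 _
  have hs1 : y ^ (n + 1) < 1 := pow_lt_one₀ hy0.le hy1 (by omega)
  have hP : 0 < 1 - y ^ (n + 1) := by linarith
  have hN : (0 : ℝ) < (n : ℝ) + 1 := by positivity
  have hk : 0 ≤ 1 - 1 / ((n : ℝ) + 1) := by
    rw [sub_nonneg, div_le_one hN]
    have : (0 : ℝ) ≤ n := n.cast_nonneg
    linarith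
  have hl1 : Real.log (1 - y ^ n) ≤ -y ^ n := by
    linarith [Real.log_le_sub_one_of_pos (sub_pos.2 ht1)]
  have hl2 : -Real.log (1 - y ^ (n + 1)) ≤ y ^ (n + 1) / (1 - y ^ (n + 1)) := by
    have := Real.one_sub_inv_le_log_of_pos hP
    have e : y ^ (n + 1) / (1 - y ^ (n + 1)) = -(1 - (1 - y ^ (n + 1))⁻¹) := by
      field_simp
      ring
    linarith
  have hce : c = y * (1 - y ^ n) / (1 - y ^ (n + 1)) := by
    rw [eq_div_iff hP.ne', hc]
  have e1 : c * -y ^ n + (1 - 1 / ((n : ℝ) + 1)) * (y ^ (n + 1) / (1 - y ^ (n + 1)))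
      = -(y ^ (n + 1) / (1 - y ^ (n + 1)) * (1 / ((n : ℝ) + 1) - y ^ n)) := by
    rw [hce]
    generalize 1 / ((n : ℝ) + 1) = k
    field_simp
    ring
  have h1 := mul_le_mul_of_nonneg_left hl1 hc0.le
  have h2 := mul_le_mul_of_nonneg_left hl2 hk
  have h3 : y ^ (n + 1) ≤ y ^ (n + 1) / (1 - y ^ (n + 1)) := by
    rw [le_div_iff₀ hP]
    nlinarith
  have h4 : c ^ (n + 1) ≤ y ^ (n + 1) / (1 - y ^ (n + 1)) :=
    (pow_le_pow_left₀ hc0.le hcy _).trans h3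
  have h5 : y ^ n ≤ (2 * c) ^ n := pow_le_pow_left₀ hy0.le hyc _
  have h6 : c ^ (n + 1) * (1 / ((n : ℝ) + 1) - (2 * c) ^ n)
      ≤ y ^ (n + 1) / (1 - y ^ (n + 1)) * (1 / ((n : ℝ) + 1) - y ^ n) :=
    mul_le_mul h4 (by linarith) hq (by positivity)
  linarith

/-- The whole expression is negative as soon as `1 - log c < d c ^ n (1 / (n + 1) - (2 c) ^ n)`. -/
lemma entropy_neg_of_bound (n : ℕ) (hn : 2 ≤ n) (d c z : ℝ) (hd : 0 < d) (hz : 0 < z)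
    (hc : z * ((z + 1) ^ n - z ^ n) / ((z + 1) ^ (n + 1) - z ^ (n + 1)) = c)
    (hb : 1 - Real.log c < d * c ^ n * (1 / ((n : ℝ) + 1) - (2 * c) ^ n)) :
    d / ((n : ℝ) + 1) * Real.log (d / ((n : ℝ) + 1)) + d * c * Real.log (d * c)
      + d * (1 - c) * Real.log (d * (1 - c)) - c * Real.log c - (1 - c) * Real.log (1 - c)
      - d * Real.log d
      - d / ((n : ℝ) + 1)
        * Real.log (d / (((n : ℝ) + 1) * ((z + 1) ^ (n + 1) - z ^ (n + 1))))
      - d * c * Real.log z < 0 := by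
  have hw : 0 < z + 1 := by linarith
  obtain ⟨y, hy⟩ : ∃ y, y = z / (z + 1) := ⟨_, rfl⟩
  have hy0 : 0 < y := hy ▸ div_pos hz hw
  have hy1 : y < 1 := by rw [hy, div_lt_one hw]; linarith
  have hzy : z = y * (z + 1) := by rw [hy]; field_simp
  have ht0 : 0 < y ^ n := pow_pos hy0 n
  have ht1 : y ^ n < 1 := pow_lt_one₀ hy0.le hy1 (by omega)
  have hs1 : y ^ (n + 1) < 1 := pow_lt_one₀ hy0.le hy1 (by omega)
  have hP : 0 < 1 - y ^ (n + 1) := by linarith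
  have hQ : 0 < 1 - y ^ n := by linarith
  have hN : (0 : ℝ) < (n : ℝ) + 1 := by positivity
  have hD : (z + 1) ^ (n + 1) - z ^ (n + 1) = (z + 1) ^ (n + 1) * (1 - y ^ (n + 1)) := by
    have : z ^ (n + 1) = y ^ (n + 1) * (z + 1) ^ (n + 1) := by
      rw [← mul_pow, ← hzy]
    rw [this]; ring
  have hD' : (z + 1) ^ n - z ^ n = (z + 1) ^ n * (1 - y ^ n) := by
    have : z ^ n = y ^ n * (z + 1) ^ n := by rw [← mul_pow, ← hzy]
    rw [this]; ring
  have hcy : c = y * (1 - y ^ n) / (1 - y ^ (n + 1)) := by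
    rw [← hc, hD, hD']
    have : z * ((z + 1) ^ n * (1 - y ^ n)) = (z + 1) ^ (n + 1) * (y * (1 - y ^ n)) := by
      rw [pow_succ]
      linear_combination ((z + 1) ^ n * (1 - y ^ n)) * hzy
    rw [this, mul_div_mul_left _ _ (pow_pos hw _).ne']
  have hcm : c * (1 - y ^ (n + 1)) = y * (1 - y ^ n) := by
    rw [hcy]; field_simp
  have hc1y : 1 - c = (1 - y) / (1 - y ^ (n + 1)) := by
    rw [eq_div_iff hP.ne']
    linear_combination -hcm
  obtain ⟨hc0, hcle, -⟩ := y_bounds n hn y c hy0 hy1 hcm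
  have hc1 : c < 1 := by linarith
  have hlc : Real.log c = Real.log y + Real.log (1 - y ^ n) - Real.log (1 - y ^ (n + 1)) := by
    rw [hcy, Real.log_div (by positivity) hP.ne', Real.log_mul hy0.ne' hQ.ne']
  have hy1' : 1 - y = (z + 1)⁻¹ := by rw [hy]; field_simp; ring
  have hl1c : Real.log (1 - c) = -Real.log (z + 1) - Real.log (1 - y ^ (n + 1)) := by
    rw [hc1y, Real.log_div (by linarith) hP.ne', hy1', Real.log_inv]
  have hlz : Real.log z = Real.log y + Real.log (z + 1) := by
    conv_lhs => rw [hzy]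
    rw [Real.log_mul hy0.ne' hw.ne']
  have hlD : Real.log (d / (((n : ℝ) + 1) * ((z + 1) ^ (n + 1) - z ^ (n + 1))))
      = Real.log (d / ((n : ℝ) + 1))
        - (((n : ℝ) + 1) * Real.log (z + 1) + Real.log (1 - y ^ (n + 1))) := by
    rw [hD, ← div_div, Real.log_div (by positivity) (by positivity),
      Real.log_mul (by positivity) hP.ne', Real.log_pow]
    push_cast
    ring
  have hldc : Real.log (d * c) = Real.log d + Real.log c := Real.log_mul hd.ne' hc0.ne'
  have hld1c : Real.log (d * (1 - c)) = Real.log d + Real.log (1 - c) :=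
    Real.log_mul hd.ne' (by linarith)
  have hlogc : Real.log c < 0 := Real.log_neg hc0 hc1
  have hq : 0 < 1 / ((n : ℝ) + 1) - (2 * c) ^ n := by
    have : 0 < d * c ^ n * (1 / ((n : ℝ) + 1) - (2 * c) ^ n) := by linarith
    exact pos_of_mul_pos_right this (by positivity)
  have hf := factor_bound n hn y c hy0 hy1 hcm hq.le
  have hE := neg_entropy_lower c hc1
  have hkey : d / ((n : ℝ) + 1) * Real.log (d / ((n : ℝ) + 1)) + d * c * Real.log (d * c)
      + d * (1 - c) * Real.log (d * (1 - c)) - c * Real.log c - (1 - c) * Real.log (1 - c)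
      - d * Real.log d
      - d / ((n : ℝ) + 1)
        * Real.log (d / (((n : ℝ) + 1) * ((z + 1) ^ (n + 1) - z ^ (n + 1))))
      - d * c * Real.log z
      = d * (c * Real.log (1 - y ^ n)
          - (1 - 1 / ((n : ℝ) + 1)) * Real.log (1 - y ^ (n + 1)))
        - c * Real.log c - (1 - c) * Real.log (1 - c) := by
    rw [hlD, hldc, hld1c, hlz]
    have a : d * (c * Real.log c + (1 - c) * Real.log (1 - c)) =
        d * (c * (Real.log y + Real.log (1 - y ^ n) - Real.log (1 - y ^ (n + 1)))
          + (1 - c) * (-Real.log (z + 1) - Real.log (1 - y ^ (n + 1)))) := by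
      rw [hlc, hl1c]
    have b : d / ((n : ℝ) + 1) * (((n : ℝ) + 1) * Real.log (z + 1)) = d * Real.log (z + 1) := by
      field_simp
    linear_combination a + b
  rw [hkey]
  have h1 := mul_le_mul_of_nonneg_left hf hd.le
  have h2 := mul_lt_mul_of_pos_left hb hc0
  rw [pow_succ c] at h1
  linarith

/-- For large `d`, the bound required by `entropy_neg_of_bound` holds. -/
lemma eventually_bound (n : ℕ) (hn : 2 ≤ n) (ε : ℝ) (hε : 0 < ε) :
    ∀ᶠ d : ℝ in atTop, ∀ c : ℝ,
      c = (1 + ε) * ((((n : ℝ) + 1) * Real.log d / ((n : ℝ) * d)) ^ ((1 : ℝ) / (n : ℝ))) →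
      1 - Real.log c < d * c ^ n * (1 / ((n : ℝ) + 1) - (2 * c) ^ n) := by
  have hn0 : (0 : ℝ) < n := by exact_mod_cast (by omega : 0 < n)
  have hN : (0 : ℝ) < (n : ℝ) + 1 := by positivity
  obtain ⟨K, hK⟩ : ∃ K, K = (1 + ε) ^ n * (((n : ℝ) + 1) / n) := ⟨_, rfl⟩
  have hK0 : 0 < K := by rw [hK]; positivity
  have hG : 1 < (1 + ε) ^ n := one_lt_pow₀ (by linarith) (by omega)
  -- `c ^ n = K * (log d / d)` tends to zero
  have hlim : Tendsto (fun d : ℝ => (1 + ε) ^ n *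
      (1 - ((n : ℝ) + 1) * (2 ^ n * (K * (Real.log d / d))))) atTop (𝓝 ((1 + ε) ^ n)) := by
    have h0 : Tendsto (fun d : ℝ => Real.log d / d) atTop (𝓝 0) :=
      Real.isLittleO_log_id_atTop.tendsto_div_nhds_zero
    have := ((((h0.const_mul K).const_mul (2 ^ n)).const_mul ((n : ℝ) + 1)).const_sub 1).const_mul
      ((1 + ε) ^ n)
    simpa using this
  have hlog : Tendsto (fun d : ℝ => Real.log (K * Real.log d)) atTop atTop :=
    Real.tendsto_log_atTop.comp (Real.tendsto_log_atTop.const_mul_atTop hK0)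
  filter_upwards [hlim.eventually (lt_mem_nhds hG), hlog.eventually_ge_atTop (n : ℝ),
    eventually_gt_atTop 1] with d h1 h2 hd c hc
  have hd0 : 0 < d := by linarith
  have hL : 0 < Real.log d := Real.log_pos hd
  have hb0 : 0 < ((n : ℝ) + 1) * Real.log d / ((n : ℝ) * d) := by positivity
  have hc0 : 0 < c := by rw [hc]; positivity
  have hcn : c ^ n = K * (Real.log d / d) := by
    rw [hc, mul_pow, one_div, Real.rpow_inv_natCast_pow hb0.le (by omega), hK]
    field_simp
  have hlc : (n : ℝ) * Real.log c = Real.log (K * Real.log d) - Real.log d := by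
    rw [← Real.log_pow, hcn, ← mul_div_assoc, Real.log_div (by positivity) hd0.ne']
  have hle : 1 - Real.log c ≤ Real.log d / n := by
    rw [le_div_iff₀ hn0]
    linarith
  refine hle.trans_lt ?_
  have e : d * c ^ n * (1 / ((n : ℝ) + 1) - (2 * c) ^ n) = Real.log d / n *
      ((1 + ε) ^ n * (1 - ((n : ℝ) + 1) * (2 ^ n * (K * (Real.log d / d))))) := by
    have e1 : d * c ^ n = (1 + ε) ^ n * (((n : ℝ) + 1) / n) * Real.log d := by
      rw [hcn, hK]; field_simp
    rw [mul_pow, hcn.symm, e1]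
    field_simp
  rw [e]
  exact lt_mul_of_one_lt_right (by positivity) h1

/-- For every integer `r ≥ 3` and `ε > 0` there is `d₀` such that for every real `d ≥ d₀`,
with `c = (1+ε)(r log d/((r−1)d))^(1/(r−1))`, `z₂` the unique positive solution of
`z₂((z₂+1)^(r−1) − z₂^(r−1))/((z₂+1)^r − z₂^r) = c`, `z₁ = d/(r((z₂+1)^r − z₂^r))` and
`h(x) = x log x`, the entropy-type expression is negative. -/
theorem entropy_expression_negative (r : ℕ) (hr : 3 ≤ r) (ε : ℝ) (hε : 0 < ε) :
    ∃ d₀ : ℝ, ∀ d : ℝ, d₀ ≤ d →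
      ∀ c : ℝ,
        c = (1 + ε) * ((r * Real.log d / (((r : ℝ) - 1) * d)) ^ ((1 : ℝ) / ((r : ℝ) - 1))) →
        ∀ z₂ : ℝ, 0 < z₂ →
          z₂ * ((z₂ + 1) ^ (r - 1) - z₂ ^ (r - 1)) / ((z₂ + 1) ^ r - z₂ ^ r) = c →
          ∀ z₁ : ℝ, z₁ = d / (r * ((z₂ + 1) ^ r - z₂ ^ r)) →
            ∀ h : ℝ → ℝ, (∀ x : ℝ, h x = x * Real.log x) →
              h (d / r) + h (d * c) + h (d * (1 - c)) - h c - h (1 - c) - h d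
                  - (d / r) * Real.log z₁ - d * c * Real.log z₂ < 0 := by
  obtain ⟨n, rfl⟩ : ∃ n, r = n + 1 := ⟨r - 1, by omega⟩
  have hn : 2 ≤ n := by omega
  obtain ⟨d₀, hd₀⟩ := eventually_atTop.1
    ((eventually_bound n hn ε hε).and (eventually_gt_atTop (0 : ℝ)))
  refine ⟨d₀, fun d hd c hc z hz hzc z₁ hz₁ h hh => ?_⟩
  obtain ⟨hb, hd0⟩ := hd₀ d hd
  simp only [Nat.cast_add, Nat.cast_one, add_sub_cancel_right, Nat.add_sub_cancel]
    at hc hzc hz₁ ⊢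
  simp only [hh, hz₁]
  exact entropy_neg_of_bound n hn d c z hd0 hz hzc (hb c hc)
end

section
/- For every integer r ≥ 3 and every ε > 0 there exists d₀ = d₀(r, ε) such that for every fixed integer d ≥ d₀, with high probability α(H_r(n,d)) ≤ (1+ε)·(r log d/((r−1)d))^{1/(r−1)}·n. -/
/-!
The bound comes from a first-moment argument over vertex sets `S` of size `k = ⌊Tn⌋ + 1`, where
`T = (1+ε)(r log d / ((r-1)d))^(1/(r-1))`, carried out inside the family of simple regular
hypergraphs by a switching argument, without a configuration model.

For fixed `S` let `N j` be the number of `d`-regular `r`-uniform hypergraphs with exactly `j` edges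
inside `S` (`level`). A switching takes an edge `{u₁, …, u_r}` disjoint from `S` and `r` incidences
`vᵢ ∈ eᵢ` with `vᵢ ∈ S`, `eᵢ ⊄ S`, and exchanges `uᵢ` with `vᵢ` for every `i`: the first edge becomes
`{v₁, …, v_r} ⊆ S`, each `eᵢ` becomes `eᵢ - vᵢ + uᵢ ⊄ S`. Degrees are preserved. Requiring that no edge
meets two of the chosen edges keeps the result simple and excludes only `O(1)` of the `≈ dk`
candidates at each choice. A hypergraph counted by `N j` has at least about
`(dn/r) · r! · (dk)^r` switchings, and at most `(j+1) · r! · (dn)^r` switchings lead to a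
hypergraph counted by `N (j+1)`. Hence (`level_switch`, `level_ratio`)
`N (j+1) * (j+1) ≥ (1-δ) μ * N j` with `μ = (d/r)(k/n)^r n`, and iterating up to `j ≈ (1-δ)μ` gives
`N 0 ≤ e^{-(1-δ)μ} poly(n)` times the size of the family (`level_zero_le`).

There are at most `(e/T)^k` sets `S`. Since `log (1/T) ≤ log d / (r-1)` while
`μ/k ≥ (1+ε)^(r-1) log d / (r-1)`, the union bound is `O(k e^{-k})` once `d` is large.

The uniform probability is meaningful only if the family is nonempty. This is
`regularFamily_nonempty`: among the `r`-uniform hypergraphs with `dn/r` edges, one that minimises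
the sum of squared degrees is regular.
-/

open Finset Filter Real

open scoped Classical

/-! ### Counting lemmas -/

/-- Sequential choice: if each element of `P₀` conflicts with at most `c` elements of `P₀`, then at
least `(|P| - mc)^m` of the `m`-tuples from `P ⊆ P₀` are free of conflicts. -/
lemma card_conflictFree_le {α : Type*} [Fintype α] (R : α → α → Prop) (c : ℕ) (P₀ : Finset α)
    (hR : ∀ a ∈ P₀, (P₀.filter (fun b => R a b)).card ≤ c) (m : ℕ) :
    ∀ P : Finset α, P ⊆ P₀ → (P.card - m * c) ^ m ≤
      (univ.filter (fun t : Fin m → α =>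
        (∀ i, t i ∈ P) ∧ ∀ i j, i < j → ¬ R (t i) (t j))).card := by
  induction m with
  | zero => intro P _; simp
  | succ m ih =>
    intro P hP
    have h1 : (P.sigma (fun a => univ.filter (fun t : Fin m → α =>
        (∀ i, t i ∈ P.filter (fun b => ¬ R a b)) ∧ ∀ i j, i < j → ¬ R (t i) (t j)))).card ≤
        (univ.filter (fun t : Fin (m + 1) → α =>
        (∀ i, t i ∈ P) ∧ ∀ i j, i < j → ¬ R (t i) (t j))).card := by
      refine Finset.card_le_card_of_injOn
        (fun x => (Fin.cons x.1 x.2 : Fin (m + 1) → α)) ?_ ?_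
      · rintro ⟨a, t⟩ hx
        simp only [coe_sigma, Set.mem_sigma_iff, mem_coe, mem_filter, mem_univ, true_and] at hx
        obtain ⟨ha, ht, ht'⟩ := hx
        simp only [coe_filter, mem_univ, true_and, Set.mem_ofPred_eq]
        refine ⟨fun i => ?_, fun i j => ?_⟩
        · refine Fin.cases ?_ (fun i => ?_) i
          · simpa using ha
          · simpa using (ht i).1
        · refine Fin.cases ?_ (fun j => ?_) j
          · intro h; exact absurd h (by simp)
          · refine Fin.cases ?_ (fun i => ?_) i
            · intro _; simpa using (ht j).2
            · intro h; simpa using ht' i j (by simpa using h)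
      · rintro ⟨a, t⟩ _ ⟨b, s⟩ _ h
        have h' := Fin.cons_injective2 h
        obtain ⟨rfl, rfl⟩ := h'
        rfl
    refine le_trans ?_ h1
    rw [Finset.card_sigma, pow_succ']
    calc (P.card - (m + 1) * c) * (P.card - (m + 1) * c) ^ m
        ≤ P.card * (P.card - (m + 1) * c) ^ m := by gcongr; omega
      _ = ∑ a ∈ P, (P.card - (m + 1) * c) ^ m := by simp
      _ ≤ _ := by
        refine Finset.sum_le_sum (fun a ha => ?_)
        refine le_trans ?_ (ih (P.filter (fun b => ¬ R a b)) ((filter_subset _ _).trans hP))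
        gcongr 1
        have h2 := Finset.card_filter_add_card_filter_not (s := P) (fun b => R a b)
        have h3 : (P.filter (fun b => R a b)).card ≤ c :=
          (card_le_card (filter_subset_filter _ hP)).trans (hR a (hP ha))
        have : (m + 1) * c = m * c + c := by ring
        omega

lemma card_orderings {n r : ℕ} (e : Finset (Fin n)) (he : e.card = r) :
    (univ.filter (fun u : Fin r → Fin n =>
      Function.Injective u ∧ univ.image u = e)).card = r.factorial := by
  have h : (univ.filter (fun u : Fin r → Fin n =>
      Function.Injective u ∧ univ.image u = e)).card = Fintype.card (Fin r ↪ e) := by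
    rw [← Finset.card_univ]
    symm
    refine Finset.card_bij (fun f _ => fun i => (f i : Fin n)) ?_ ?_ ?_
    · intro f _
      have hinj : Function.Injective (fun i => (f i : Fin n)) :=
        Subtype.val_injective.comp f.injective
      simp only [mem_filter, mem_univ, true_and]
      refine ⟨hinj, Finset.eq_of_subset_of_card_le ?_ ?_⟩
      · intro x hx
        obtain ⟨i, -, rfl⟩ := Finset.mem_image.1 hx
        exact (f i).2
      · rw [Finset.card_image_of_injective _ hinj]; simp [he]
    · intro f _ g _ h
      ext i
      exact congrArg Fin.val (congrFun h i)
    · intro u hu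
      simp only [mem_filter, mem_univ, true_and] at hu
      refine ⟨⟨fun i => ⟨u i, hu.2 ▸ Finset.mem_image_of_mem u (mem_univ i)⟩, ?_⟩, mem_univ _, rfl⟩
      intro i j hij
      exact hu.1 (congrArg Subtype.val hij)
  rw [h, Fintype.card_embedding_eq]
  simp [he, Nat.descFactorial_self]

lemma card_orderings_family {n r : ℕ} (D : Finset (Finset (Fin n))) (hD : ∀ e ∈ D, e.card = r) :
    (univ.filter (fun u : Fin r → Fin n =>
      Function.Injective u ∧ univ.image u ∈ D)).card = D.card * r.factorial := by
  rw [Finset.card_eq_sum_card_fiberwise (f := fun u : Fin r → Fin n => univ.image u) (t := D)]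
  · rw [Finset.sum_congr rfl (g := fun _ => r.factorial)]
    · simp
    · intro e he
      rw [← card_orderings e (hD e he)]
      congr 1
      ext u
      simp only [mem_filter, mem_univ, true_and]
      constructor
      · rintro ⟨⟨h1, h2⟩, h3⟩; exact ⟨h1, h3⟩
      · rintro ⟨h1, h3⟩; exact ⟨⟨h1, h3 ▸ he⟩, h3⟩
  · intro u hu
    simpa using (by simpa using hu : _ ∧ _).2

/-- The number of incidences `v ∈ e` with `e ∈ E` and `v ∈ S`. -/
lemma sum_card_inter {n r d : ℕ} {E : Finset (Finset (Fin n))} (hE : E ∈ regularFamily n r d)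
    (S : Finset (Fin n)) :
    ((E ×ˢ S).filter (fun p => p.2 ∈ p.1)).card = d * S.card := by
  simp only [regularFamily, mem_filter, mem_univ, true_and] at hE
  rw [Finset.card_filter, Finset.sum_product_right]
  simp_rw [← Finset.card_filter]
  rw [Finset.sum_congr rfl (fun v _ => hE.2 v)]
  simp [mul_comm]

lemma card_edges_mul {n r d : ℕ} {E : Finset (Finset (Fin n))} (hE : E ∈ regularFamily n r d) :
    E.card * r = d * n := by
  have h := sum_card_inter hE univ
  simp only [regularFamily, mem_filter, mem_univ, true_and] at hE
  rw [Finset.card_filter, Finset.sum_product] at h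
  simp_rw [← Finset.card_filter] at h
  rw [Finset.sum_congr rfl (g := fun _ => r)] at h
  · simpa using h
  · intro e he
    rw [← hE.1 e he]; congr 1; ext; simp

lemma card_edges_disjoint {n r d : ℕ} {E : Finset (Finset (Fin n))}
    (hE : E ∈ regularFamily n r d) (S : Finset (Fin n)) :
    E.card - d * S.card ≤ (E.filter (fun e => Disjoint e S)).card := by
  have h2 := Finset.card_filter_add_card_filter_not (s := E) (fun e => Disjoint e S)
  have h3 : (E.filter (fun e => ¬ Disjoint e S)).card ≤ d * S.card := by
    rw [← sum_card_inter hE S]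
    refine (Finset.card_le_card (t := ((E ×ˢ S).filter (fun p => p.2 ∈ p.1)).image Prod.fst)
      ?_).trans Finset.card_image_le
    intro e he
    simp only [mem_filter, Finset.not_disjoint_iff] at he
    obtain ⟨he, v, hv, hvS⟩ := he
    exact Finset.mem_image.2 ⟨(e, v), by simp [he, hv, hvS], rfl⟩
  omega

/-! ### Switchings -/

/-- The incidences `(e, v)`, `v ∈ e`, of `E` with `v ∈ S` and `e` not contained in `S`. -/
noncomputable def crossPairs {n : ℕ} (E : Finset (Finset (Fin n))) (S : Finset (Fin n)) :
    Finset (Finset (Fin n) × Fin n) :=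
  (E ×ˢ S).filter (fun p => p.2 ∈ p.1 ∧ ¬ p.1 ⊆ S)

lemma card_crossPairs {n r d : ℕ} {E : Finset (Finset (Fin n))}
    (hE : E ∈ regularFamily n r d) (S : Finset (Fin n)) :
    d * S.card - r * (E.filter (fun e => e ⊆ S)).card ≤ (crossPairs E S).card := by
  have h1 := sum_card_inter hE S
  have h2 := Finset.card_filter_add_card_filter_not
    (s := (E ×ˢ S).filter (fun p => p.2 ∈ p.1)) (fun p => p.1 ⊆ S)
  have h3 : (((E ×ˢ S).filter (fun p => p.2 ∈ p.1)).filter (fun p => p.1 ⊆ S)).card ≤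
      r * (E.filter (fun e => e ⊆ S)).card := by
    simp only [regularFamily, mem_filter, mem_univ, true_and] at hE
    have : (((E ×ˢ S).filter (fun p => p.2 ∈ p.1)).filter (fun p => p.1 ⊆ S)) ⊆
        ((E.filter (fun e => e ⊆ S)).sigma (fun e => e)).image (fun x => (x.1, x.2)) := by
      rintro ⟨e, v⟩ h
      simp only [mem_filter, mem_product] at h
      exact Finset.mem_image.2 ⟨⟨e, v⟩, by simp [h], rfl⟩
    refine (card_le_card this).trans (card_image_le.trans ?_)
    rw [card_sigma, Finset.sum_congr rfl (g := fun _ => r)]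
    · simp [mul_comm]
    · intro e he; exact hE.1 e (mem_filter.1 he).1
  rw [Finset.filter_filter] at h2
  rw [crossPairs]
  rw [filter_filter] at h3 h2
  omega

/-- Some edge of `E` meets both `a` and `b`. Edges used in a common switching must not
be near: then they are disjoint, and no edge formed from vertices of two of them is in `E` already. -/
def NearIn {n : ℕ} (E : Finset (Finset (Fin n))) (a b : Finset (Fin n)) : Prop :=
  ∃ g ∈ E, ¬ Disjoint g a ∧ ¬ Disjoint g b

lemma card_near_le {n r d : ℕ} {E : Finset (Finset (Fin n))}
    (hE : E ∈ regularFamily n r d) (S a : Finset (Fin n)) (ha : a ∈ E) :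
    ((crossPairs E S).filter (fun p => NearIn E a p.1)).card ≤ r ^ 3 * d ^ 2 := by
  simp only [regularFamily, mem_filter, mem_univ, true_and] at hE
  have hsub : ((crossPairs E S).filter (fun p => NearIn E a p.1)) ⊆
      a.biUnion (fun w => (E.filter (fun g => w ∈ g)).biUnion (fun g => g.biUnion (fun w' =>
        (E.filter (fun e => w' ∈ e)).biUnion (fun e => e.image (fun v => (e, v)))))) := by
    rintro ⟨e, v⟩ h
    simp only [crossPairs, mem_filter, mem_product, NearIn, Finset.not_disjoint_iff] at h
    obtain ⟨⟨⟨he, hvS⟩, hve, -⟩, g, hg, ⟨w, hwg, hwa⟩, w', hw'g, hw'e⟩ := h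
    simp only [mem_biUnion, mem_filter, mem_image]
    exact ⟨w, hwa, g, ⟨hg, hwg⟩, w', hw'g, e, ⟨he, hw'e⟩, v, hve, rfl⟩
  refine (card_le_card hsub).trans ?_
  have e1 : r ^ 3 * d ^ 2 = r * (d * (r * (d * r))) := by ring
  rw [e1]
  refine (Finset.card_biUnion_le_card_mul _ _ (d * (r * (d * r))) ?_).trans (by rw [hE.1 a ha])
  intro w _
  refine (Finset.card_biUnion_le_card_mul _ _ (r * (d * r)) ?_).trans (by rw [hE.2 w])
  intro g hg
  refine (Finset.card_biUnion_le_card_mul _ _ (d * r) ?_).trans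
    (by rw [hE.1 g (mem_filter.1 hg).1])
  intro w' _
  refine (Finset.card_biUnion_le_card_mul _ _ r ?_).trans (by rw [hE.2 w'])
  intro e he
  exact card_image_le.trans (by rw [hE.1 e (mem_filter.1 he).1])

/-- Data `(u, p)` for a switching: an ordered vertex tuple `u₁, …, u_r`, whose underlying set is an
edge, and `r` incidences `pᵢ = (eᵢ, vᵢ)` with `vᵢ ∈ eᵢ`. -/
abbrev SwitchData (n r : ℕ) : Type := (Fin r → Fin n) × (Fin r → Finset (Fin n) × Fin n)

/-- The admissible switchings of `E` with respect to `S`: the `uᵢ` form an edge of `E` disjoint from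
`S`, the `(eᵢ, vᵢ)` are incidences in `crossPairs E S`, and no edge of `E` meets two of the `r + 1`
chosen edges. -/
noncomputable def switchings {n : ℕ} (r : ℕ) (E : Finset (Finset (Fin n))) (S : Finset (Fin n)) :
    Finset (SwitchData n r) :=
  univ.filter (fun t =>
    (Function.Injective t.1 ∧ univ.image t.1 ∈ E.filter (fun e => Disjoint e S)) ∧
    (∀ i, t.2 i ∈ (crossPairs E S).filter (fun p => ¬ NearIn E (univ.image t.1) p.1)) ∧
    ∀ i j, i < j → ¬ NearIn E (t.2 i).1 (t.2 j).1)

lemma card_switchings {n r d : ℕ} {E : Finset (Finset (Fin n))}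
    (hE : E ∈ regularFamily n r d) (S : Finset (Fin n)) :
    (E.card - d * S.card) * r.factorial *
      (d * S.card - r * (E.filter (fun e => e ⊆ S)).card - (r + 1) * (r ^ 3 * d ^ 2)) ^ r ≤
    (switchings r E S).card := by
  set D := E.filter (fun e => Disjoint e S) with hD
  set P := crossPairs E S with hP
  have hE' := hE
  simp only [regularFamily, mem_filter, mem_univ, true_and] at hE'
  have hDcard := card_orderings_family (r := r) D (fun e he => hE'.1 e (mem_filter.1 he).1)
  set U := univ.filter (fun u : Fin r → Fin n =>
      Function.Injective u ∧ univ.image u ∈ D) with hU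
  set T : (Fin r → Fin n) → Finset (Fin r → Finset (Fin n) × Fin n) := fun u =>
    univ.filter (fun t =>
      (∀ i, t i ∈ P.filter (fun p => ¬ NearIn E (univ.image u) p.1)) ∧
      ∀ i j, i < j → ¬ NearIn E (t i).1 (t j).1) with hT
  have hsw : (U.sigma T).card ≤ (switchings r E S).card := by
    refine Finset.card_le_card_of_injOn (fun x => (x.1, x.2)) ?_ ?_
    · rintro ⟨u, t⟩ hx
      simp only [coe_sigma, Set.mem_sigma_iff, mem_coe, hU, hT, mem_filter, mem_univ,
        true_and] at hx
      simp only [switchings, coe_filter, Set.mem_ofPred_eq, mem_univ, true_and, mem_filter]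
      simpa [hD] using hx
    · rintro ⟨u, t⟩ _ ⟨u', t'⟩ _ h
      simp only [Prod.mk.injEq] at h
      obtain ⟨rfl, rfl⟩ := h
      rfl
  refine le_trans ?_ hsw
  rw [card_sigma]
  have hTle : ∀ u ∈ U, (d * S.card - r * (E.filter (fun e => e ⊆ S)).card -
      (r + 1) * (r ^ 3 * d ^ 2)) ^ r ≤ (T u).card := by
    intro u hu
    have huE : univ.image u ∈ E := (mem_filter.1 (mem_filter.1 hu).2.2).1
    have hnear := card_near_le hE S (univ.image u) huE
    have hcf := card_conflictFree_le (fun p q => NearIn E p.1 q.1) (r ^ 3 * d ^ 2) P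
      (fun a ha => card_near_le hE S a.1 (mem_product.1 (mem_filter.1 ha).1).1) r
      (P.filter (fun p => ¬ NearIn E (univ.image u) p.1)) (filter_subset _ _)
    refine le_trans ?_ (hcf.trans_eq (by rw [hT]; congr!))
    gcongr 1
    have h2 := Finset.card_filter_add_card_filter_not (s := P)
      (fun p => NearIn E (univ.image u) p.1)
    have h4 := card_crossPairs hE S
    rw [← hP] at hnear h4
    have : (r + 1) * (r ^ 3 * d ^ 2) = r * (r ^ 3 * d ^ 2) + r ^ 3 * d ^ 2 := by ring
    omega
  refine le_trans ?_ (Finset.card_nsmul_le_sum _ _ _ hTle)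
  rw [smul_eq_mul, hDcard]
  gcongr
  exact card_edges_disjoint hE S

/-- The `r + 1` edges deleted by a switching. -/
noncomputable def removed {n r : ℕ} (t : SwitchData n r) : Finset (Finset (Fin n)) :=
  insert (univ.image t.1) (univ.image (fun i => (t.2 i).1))

/-- The data `(v, (eᵢ - vᵢ + uᵢ, uᵢ))` undoing the switching `t`. The edges created by `t` are
those removed by `reverseSwitch t`. -/
noncomputable def reverseSwitch {n r : ℕ} (t : SwitchData n r) : SwitchData n r :=
  (fun i => (t.2 i).2, fun i => (insert (t.1 i) ((t.2 i).1.erase (t.2 i).2), t.1 i))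

/-- The hypergraph obtained from `E` by the switching `t`. -/
noncomputable def applySwitch {n r : ℕ} (E : Finset (Finset (Fin n))) (t : SwitchData n r) :
    Finset (Finset (Fin n)) :=
  (E \ removed t) ∪ removed (reverseSwitch t)

lemma card_filter_switch {α : Type*} [DecidableEq α] (E R A : Finset α) (hR : R ⊆ E)
    (hA : Disjoint A E) (p : α → Prop) [DecidablePred p] :
    (((E \ R) ∪ A).filter p).card + (R.filter p).card = (E.filter p).card + (A.filter p).card := by
  have h1 : Disjoint ((E \ R).filter p) (A.filter p) :=
    (disjoint_filter_filter (hA.symm.mono_left sdiff_subset))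
  have h2 : Disjoint ((E \ R).filter p) (R.filter p) :=
    disjoint_filter_filter sdiff_disjoint
  have h3 : (E.filter p) = ((E \ R).filter p) ∪ (R.filter p) := by
    rw [← filter_union, sdiff_union_of_subset hR]
  rw [filter_union, h3, card_union_of_disjoint h1, card_union_of_disjoint h2]
  omega

lemma card_filter_removed {n r : ℕ} (t : SwitchData n r) (hu : Function.Injective t.1)
    (he : Function.Injective (fun i => (t.2 i).1)) (h0 : ∀ i, univ.image t.1 ≠ (t.2 i).1)
    (w : Fin n) :
    ((removed t).filter (fun e => w ∈ e)).card =
      ∑ i, ((if w = t.1 i then 1 else 0) + (if w ∈ (t.2 i).1 then 1 else 0)) := by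
  rw [removed, Finset.card_filter, Finset.sum_insert, Finset.sum_image, Finset.sum_add_distrib]
  · congr 1
    by_cases hw : ∃ i, t.1 i = w
    · obtain ⟨i, rfl⟩ := hw
      simp [hu.eq_iff]
    · push Not at hw
      rw [if_neg (by simpa using hw)]
      exact (Finset.sum_eq_zero (fun i _ => if_neg (fun h => hw i h.symm))).symm
  · intro i _ j _ h; exact he h
  · simp only [mem_image, mem_univ, true_and, not_exists]
    intro i h; exact h0 i h.symm

/-- An admissible switching yields a simple regular hypergraph with exactly one more edge inside
`S`. The reverse data consists of an ordering of an edge in `S` and `r` incidences of the new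
hypergraph, and it determines the original hypergraph and switching. -/
lemma applySwitch_spec {n r d : ℕ} (hr : 3 ≤ r) {E : Finset (Finset (Fin n))}
    (hE : E ∈ regularFamily n r d) {S : Finset (Fin n)} {t : SwitchData n r}
    (ht : t ∈ switchings r E S) :
    applySwitch E t ∈ regularFamily n r d ∧
    ((applySwitch E t).filter (fun e => e ⊆ S)).card = (E.filter (fun e => e ⊆ S)).card + 1 ∧
    Function.Injective (reverseSwitch t).1 ∧
    univ.image (reverseSwitch t).1 ∈ (applySwitch E t).filter (fun e => e ⊆ S) ∧
    (∀ i, ((reverseSwitch t).2 i).1 ∈ applySwitch E t ∧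
      ((reverseSwitch t).2 i).2 ∈ ((reverseSwitch t).2 i).1) ∧
    reverseSwitch (reverseSwitch t) = t ∧
    applySwitch (applySwitch E t) (reverseSwitch t) = E := by
  have hE' := hE
  simp only [regularFamily, mem_filter, mem_univ, true_and] at hE'
  obtain ⟨hcard, hdeg⟩ := hE'
  obtain ⟨u, p⟩ := t
  simp only [switchings, crossPairs, mem_filter, mem_univ, true_and, mem_product] at ht
  obtain ⟨⟨hu, he0, he0S⟩, hp, hpp⟩ := ht
  have heE : ∀ i, (p i).1 ∈ E := fun i => (hp i).1.1.1
  have hvS : ∀ i, (p i).2 ∈ S := fun i => (hp i).1.1.2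
  have hve : ∀ i, (p i).2 ∈ (p i).1 := fun i => (hp i).1.2.1
  have heS : ∀ i, ¬ (p i).1 ⊆ S := fun i => (hp i).1.2.2
  have hn0 : ∀ i, ¬ NearIn E (univ.image u) (p i).1 := fun i => (hp i).2
  have hn : ∀ i j, i ≠ j → ¬ NearIn E (p i).1 (p j).1 := by
    intro i j hij
    rcases lt_or_gt_of_ne hij with h | h
    · exact hpp i j h
    · rintro ⟨g, hg, h1, h2⟩; exact hpp j i h ⟨g, hg, h2, h1⟩
  have hu0 : ∀ i, u i ∈ univ.image u := fun i => mem_image_of_mem u (mem_univ i)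
  have huS : ∀ i, u i ∉ S := fun i h => Finset.disjoint_left.1 he0S (hu0 i) h
  have hself : ∀ g ∈ E, ¬ Disjoint g g := by
    intro g hg h
    have := hcard g hg
    rw [disjoint_self_iff_empty] at h
    simp [h] at this
    omega
  have hd0 : ∀ i, Disjoint (univ.image u) (p i).1 := by
    intro i; by_contra h
    exact hn0 i ⟨_, he0, hself _ he0, h⟩
  have hdd : ∀ i j, i ≠ j → Disjoint (p i).1 (p j).1 := by
    intro i j hij; by_contra h
    exact hn i j hij ⟨_, heE i, hself _ (heE i), h⟩
  have hue : ∀ i j, u i ∉ (p j).1 := fun i j h => Finset.disjoint_left.1 (hd0 j) (hu0 i) h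
  have hvinj : Function.Injective (fun i => (p i).2) := by
    intro i j h
    by_contra hij
    have h' : (p i).2 = (p j).2 := h
    exact Finset.disjoint_left.1 (hdd i j hij) (hve i) (h' ▸ hve j)
  have heinj : Function.Injective (fun i => (p i).1) := by
    intro i j h
    by_contra hij
    have h' : (p i).1 = (p j).1 := h
    exact Finset.disjoint_left.1 (hdd i j hij) (hve i) (h' ▸ hve i)
  have hnew : ∀ i, ∃ w, w ∈ (p i).1 ∧ w ≠ (p i).2 := by
    intro i
    have : 1 < (p i).1.card := by rw [hcard _ (heE i)]; omega
    obtain ⟨w, hw, hne⟩ := Finset.exists_mem_ne this (p i).2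
    exact ⟨w, hw, hne⟩
  set e' : Fin r → Finset (Fin n) := fun i => insert (u i) ((p i).1.erase (p i).2) with he'
  have hrev : reverseSwitch (u, p) = (fun i => (p i).2, fun i => (e' i, u i)) := rfl
  have hue' : ∀ i, u i ∈ e' i := fun i => mem_insert_self _ _
  have he'inj : Function.Injective e' := by
    intro i j h
    by_contra hij
    obtain ⟨w, hw, hne⟩ := hnew i
    have hw' : w ∈ e' j := h ▸ (mem_insert_of_mem (mem_erase.2 ⟨hne, hw⟩))
    rcases mem_insert.1 hw' with h1 | h1
    · exact hue j i (h1 ▸ hw)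
    · exact Finset.disjoint_left.1 (hdd i j hij) hw (mem_erase.1 h1).2
  have he'S : ∀ i, ¬ e' i ⊆ S := fun i h => huS i (h (hue' i))
  have hfS : univ.image (fun i => (p i).2) ⊆ S := by
    intro x hx
    obtain ⟨i, -, rfl⟩ := mem_image.1 hx
    exact hvS i
  have hfE : univ.image (fun i => (p i).2) ∉ E := by
    intro h
    refine hn ⟨0, by omega⟩ ⟨1, by omega⟩ (by simp) ⟨_, h, ?_, ?_⟩
    · exact Finset.not_disjoint_iff.2 ⟨_, mem_image_of_mem _ (mem_univ _), hve _⟩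
    · exact Finset.not_disjoint_iff.2 ⟨_, mem_image_of_mem _ (mem_univ _), hve _⟩
  have he'E : ∀ i, e' i ∉ E := by
    intro i h
    obtain ⟨w, hw, hne⟩ := hnew i
    exact hn0 i ⟨_, h, Finset.not_disjoint_iff.2 ⟨_, hue' i, hu0 i⟩,
      Finset.not_disjoint_iff.2 ⟨w, mem_insert_of_mem (mem_erase.2 ⟨hne, hw⟩), hw⟩⟩
  have hRE : removed (u, p) ⊆ E := by
    intro x hx
    simp only [removed, mem_insert, mem_image, mem_univ, true_and] at hx
    rcases hx with rfl | ⟨i, rfl⟩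
    · exact he0
    · exact heE i
  have hAmem : ∀ x, x ∈ removed (reverseSwitch (u, p)) ↔
      x = univ.image (fun i => (p i).2) ∨ ∃ i, e' i = x := by
    intro x
    simp only [hrev, removed, mem_insert, mem_image, mem_univ, true_and]
  have hAE : Disjoint (removed (reverseSwitch (u, p))) E := by
    rw [Finset.disjoint_left]
    intro x hx
    rcases (hAmem x).1 hx with rfl | ⟨i, rfl⟩
    · exact hfE
    · exact he'E i
  have hrr : reverseSwitch (reverseSwitch (u, p)) = (u, p) := by
    rw [hrev]
    simp only [reverseSwitch, Prod.mk.injEq, true_and]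
    funext i
    ext1
    · change insert (p i).2 ((insert (u i) ((p i).1.erase (p i).2)).erase (u i)) = (p i).1
      rw [erase_insert (fun h => hue i i (mem_erase.1 h).2), insert_erase (hve i)]
    · rfl
  refine ⟨?_, ?_, hvinj, ?_, ?_, hrr, ?_⟩
  · simp only [regularFamily, mem_filter, mem_univ, true_and]
    constructor
    · intro x hx
      rcases mem_union.1 hx with h | h
      · exact hcard x (mem_sdiff.1 h).1
      · rcases (hAmem x).1 h with rfl | ⟨i, rfl⟩
        · rw [card_image_of_injective _ hvinj]; simp
        · rw [he', card_insert_of_notMem (fun h => hue i i (mem_erase.1 h).2),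
            card_erase_of_mem (hve i), hcard _ (heE i)]
          omega
    · intro w
      have h1 := card_filter_switch E _ _ hRE hAE (fun e => w ∈ e)
      have h2 := card_filter_removed (u, p) hu heinj
        (fun i h => hue i i (h ▸ hu0 i)) w
      have h3 := card_filter_removed (reverseSwitch (u, p)) hvinj he'inj
        (fun i h => he'S i ((Eq.symm h).subset.trans hfS)) w
      have h4 : ((removed (u, p)).filter (fun e => w ∈ e)).card =
          ((removed (reverseSwitch (u, p))).filter (fun e => w ∈ e)).card := by
        rw [h2, h3]
        refine Finset.sum_congr rfl (fun i _ => ?_)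
        simp only [hrev, he', mem_insert, mem_erase]
        by_cases c1 : w = u i
        · have c2 : w ∉ (p i).1 := c1 ▸ hue i i
          have c3 : w ≠ (p i).2 := fun h => c2 (h ▸ hve i)
          simp [c1, hue i i, c1 ▸ c3]
        · by_cases c2 : w = (p i).2
          · have := hve i
            have c4 : (p i).2 ≠ u i := c2 ▸ c1
            simp [c2, this, c4]
          · simp [c1, c2]
      have h5 := hdeg w
      unfold applySwitch
      omega
  · have h1 := card_filter_switch E _ _ hRE hAE (fun e => e ⊆ S)
    have h2 : (removed (u, p)).filter (fun e => e ⊆ S) = ∅ := by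
      rw [filter_eq_empty_iff]
      intro x hx
      simp only [removed, mem_insert, mem_image, mem_univ, true_and] at hx
      rcases hx with rfl | ⟨i, rfl⟩
      · intro h; exact huS ⟨0, by omega⟩ (h (hu0 _))
      · exact heS i
    have h3 : (removed (reverseSwitch (u, p))).filter (fun e => e ⊆ S) =
        {univ.image (fun i => (p i).2)} := by
      ext x
      rw [mem_filter, hAmem, mem_singleton]
      constructor
      · rintro ⟨rfl | ⟨i, rfl⟩, h⟩
        · rfl
        · exact absurd h (he'S i)
      · rintro rfl; exact ⟨Or.inl rfl, hfS⟩
    rw [h2, h3] at h1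
    simpa [applySwitch] using h1
  · exact mem_filter.2 ⟨mem_union_right _ ((hAmem _).2 (Or.inl rfl)), hfS⟩
  · intro i
    exact ⟨mem_union_right _ ((hAmem _).2 (Or.inr ⟨i, rfl⟩)), hue' i⟩
  · rw [applySwitch, hrr, applySwitch, union_sdiff_cancel_right, sdiff_union_of_subset hRE]
    exact (hAE.symm.mono_left sdiff_subset)

/-- The regular hypergraphs with exactly `j` edges inside `S`. -/
noncomputable def level (n r d : ℕ) (S : Finset (Fin n)) (j : ℕ) :
    Finset (Finset (Finset (Fin n))) :=
  (regularFamily n r d).filter (fun E => (E.filter (fun e => e ⊆ S)).card = j)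

/-- A superset of all reverse data leading into `E`: an ordering of an edge of `E` inside `S`,
together with `r` arbitrary incidences of `E`. -/
noncomputable def reverseData {n : ℕ} (r : ℕ) (E : Finset (Finset (Fin n))) (S : Finset (Fin n)) :
    Finset (SwitchData n r) :=
  (univ.filter (fun v : Fin r → Fin n =>
    Function.Injective v ∧ univ.image v ∈ E.filter (fun e => e ⊆ S))) ×ˢ
  Fintype.piFinset (fun _ : Fin r => (E ×ˢ univ).filter (fun q => q.2 ∈ q.1))

lemma card_reverseData {n r d : ℕ} {E : Finset (Finset (Fin n))}
    (hE : E ∈ regularFamily n r d) (S : Finset (Fin n)) :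
    (reverseData r E S).card =
      (E.filter (fun e => e ⊆ S)).card * r.factorial * (d * n) ^ r := by
  have hE' := hE
  simp only [regularFamily, mem_filter, mem_univ, true_and] at hE'
  rw [reverseData, card_product,
    card_orderings_family _ (fun e he => hE'.1 e (mem_filter.1 he).1), Fintype.card_piFinset,
    Finset.prod_const, sum_card_inter hE univ]
  simp

/-- Double counting of switchings between two consecutive levels. -/
lemma level_switch {n r d : ℕ} (hr : 3 ≤ r) (S : Finset (Fin n)) (j : ℕ) :
    (level n r d S j).card * ((d * n / r - d * S.card) * r.factorial *
      (d * S.card - r * j - (r + 1) * (r ^ 3 * d ^ 2)) ^ r) ≤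
    (level n r d S (j + 1)).card * ((j + 1) * r.factorial * (d * n) ^ r) := by
  have h1 : (level n r d S j).card * ((d * n / r - d * S.card) * r.factorial *
      (d * S.card - r * j - (r + 1) * (r ^ 3 * d ^ 2)) ^ r) ≤
      ((level n r d S j).sigma (fun E => switchings r E S)).card := by
    rw [card_sigma, ← smul_eq_mul]
    refine Finset.card_nsmul_le_sum _ _ _ (fun E hE => ?_)
    obtain ⟨hE, hj⟩ := mem_filter.1 hE
    have h := card_switchings hE S
    rw [hj] at h
    have : d * n / r = E.card := by
      rw [← card_edges_mul hE, Nat.mul_div_cancel _ (by omega)]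
    rwa [this]
  have h2 : ((level n r d S (j + 1)).sigma (fun E => reverseData r E S)).card =
      (level n r d S (j + 1)).card * ((j + 1) * r.factorial * (d * n) ^ r) := by
    rw [card_sigma, Finset.sum_congr rfl (g := fun _ => (j + 1) * r.factorial * (d * n) ^ r)]
    · simp
    · intro E hE
      obtain ⟨hE, hj⟩ := mem_filter.1 hE
      rw [card_reverseData hE, hj]
  rw [← h2]
  refine h1.trans ?_
  refine Finset.card_le_card_of_injOn
    (fun x => ⟨applySwitch x.1 x.2, reverseSwitch x.2⟩) ?_ ?_
  · rintro ⟨E, t⟩ hx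
    obtain ⟨hE, ht⟩ := mem_sigma.1 hx
    obtain ⟨hE, hj⟩ := mem_filter.1 hE
    obtain ⟨a1, a2, a3, a4, a5, -, -⟩ := applySwitch_spec hr hE ht
    refine mem_sigma.2 ⟨mem_filter.2 ⟨a1, ?_⟩, mem_product.2 ⟨?_, ?_⟩⟩
    · rw [a2]; simpa using hj
    · exact mem_filter.2 ⟨mem_univ _, a3, a4⟩
    · exact Fintype.mem_piFinset.2 (fun i => mem_filter.2
        ⟨mem_product.2 ⟨(a5 i).1, mem_univ _⟩, (a5 i).2⟩)
  · rintro ⟨E, t⟩ hx ⟨E₂, t₂⟩ hx₂ h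
    obtain ⟨hE, ht⟩ := mem_sigma.1 hx
    obtain ⟨hE₂, ht₂⟩ := mem_sigma.1 hx₂
    obtain ⟨-, -, -, -, -, b1, b2⟩ := applySwitch_spec hr (mem_filter.1 hE).1 ht
    obtain ⟨-, -, -, -, -, c1, c2⟩ := applySwitch_spec hr (mem_filter.1 hE₂).1 ht₂
    simp only [Sigma.mk.injEq, heq_eq_eq] at h b1 b2 c1 c2
    obtain ⟨h1, h2⟩ := h
    rw [h1, h2] at b2
    rw [h2] at b1
    have e1 : E = E₂ := b2.symm.trans c2
    have e2 : t = t₂ := b1.symm.trans c1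
    rw [e1, e2]

/-! ### Existence of regular hypergraphs -/

/-- Take `dn/r` edges so as to minimise the sum of squared degrees. If `deg u ≥ deg v + 2`, some edge
`e` through `u` but not `v` can be replaced by `e - u + v`, which lowers that sum. So all degrees
differ by at most one, and as their average is `d` they all equal `d`. -/
lemma regularFamily_nonempty_s10 {n r d : ℕ} (hdvd : r ∣ d * n)
    (hle : d * n / r ≤ n.choose r) : (regularFamily n r d).Nonempty := by
  set m := d * n / r with hm
  set F := powersetCard m (powersetCard r (univ : Finset (Fin n))) with hF
  have hFne : F.Nonempty := by
    apply powersetCard_nonempty.2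
    simpa using hle
  set deg : Finset (Finset (Fin n)) → Fin n → ℕ :=
    fun E v => (E.filter (fun e => v ∈ e)).card with hdeg
  obtain ⟨E, hEF, hmin⟩ := exists_min_image F (fun E => ∑ v, ((deg E v : ℤ)) ^ 2) hFne
  obtain ⟨hEsub, hEcard⟩ := mem_powersetCard.1 hEF
  have hr : ∀ e ∈ E, e.card = r := fun e he => (mem_powersetCard.1 (hEsub he)).2
  have hbal : ∀ u v, deg E u ≤ deg E v + 1 := by
    intro u v
    by_contra hcon
    push Not at hcon
    have huv : u ≠ v := by rintro rfl; omega
    have hAB : (E.filter (fun e => v ∈ e ∧ u ∉ e)).card <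
        (E.filter (fun e => u ∈ e ∧ v ∉ e)).card := by
      have h1 := card_filter_add_card_filter_not (s := E.filter (fun e => u ∈ e)) (fun e => v ∈ e)
      have h2 := card_filter_add_card_filter_not (s := E.filter (fun e => v ∈ e)) (fun e => u ∈ e)
      rw [filter_filter, filter_filter] at h1 h2
      have h3 : E.filter (fun e => u ∈ e ∧ v ∈ e) = E.filter (fun e => v ∈ e ∧ u ∈ e) := by
        congr 1; ext e; exact and_comm
      rw [h3] at h1
      simp only [hdeg] at hcon
      omega
    -- Otherwise `e ↦ e - u + v` injects the edges through `u` only into those through `v` only.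
    have hex : ∃ e ∈ E, u ∈ e ∧ v ∉ e ∧ insert v (e.erase u) ∉ E := by
      by_contra hno
      push Not at hno
      refine absurd (card_le_card_of_injOn (fun e => insert v (e.erase u)) ?_ ?_) (not_le.2 hAB)
      · intro e he
        obtain ⟨he, hu, hv⟩ := mem_filter.1 he
        refine mem_filter.2 ⟨hno e he hu hv, mem_insert_self _ _, ?_⟩
        simp [huv]
      · intro e he f hf h
        obtain ⟨he, hu, hv⟩ := mem_filter.1 he
        obtain ⟨hf, hu', hv'⟩ := mem_filter.1 hf
        have h' := congrArg (fun x => insert u (Finset.erase x v)) h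
        simpa [erase_insert, hv, hv', insert_erase, hu, hu'] using h'
    obtain ⟨e, he, hu, hv, hnew⟩ := hex
    set E' := insert (insert v (e.erase u)) (E.erase e) with hE'
    have hnew' : insert v (e.erase u) ∉ E.erase e := fun h => hnew (mem_erase.1 h).2
    have hcardnew : (insert v (e.erase u)).card = r := by
      rw [card_insert_of_notMem (fun h => hv (mem_erase.1 h).2), card_erase_add_one hu, hr e he]
    have hE'F : E' ∈ F := by
      refine mem_powersetCard.2 ⟨?_, ?_⟩
      · intro x hx
        rcases mem_insert.1 hx with rfl | hx
        · exact mem_powersetCard.2 ⟨subset_univ _, hcardnew⟩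
        · exact hEsub (mem_erase.1 hx).2
      · rw [hE', card_insert_of_notMem hnew', card_erase_add_one he, hEcard]
    have hdeg' : ∀ w, (deg E' w : ℤ) =
        deg E w + (if w = v then 1 else 0) - (if w = u then 1 else 0) := by
      intro w
      have h1 : deg E' w = (if w ∈ insert v (e.erase u) then 1 else 0) + deg (E.erase e) w := by
        simp only [hdeg, hE', card_filter]
        rw [sum_insert hnew']
      have h2 : deg E w = (if w ∈ e then 1 else 0) + deg (E.erase e) w := by
        simp only [hdeg, card_filter]
        exact (add_sum_erase E (fun e => if w ∈ e then 1 else 0) he).symm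
      rw [h1, h2]
      by_cases c1 : w = v
      · subst c1
        have : w ≠ u := huv.symm
        simp [hv, this, add_comm]
      · by_cases c2 : w = u
        · subst c2
          simp [hu, c1]
        · simp [c1, c2]
    have hsum : ∑ w, ((deg E' w : ℤ)) ^ 2 =
        ∑ w, ((deg E w : ℤ)) ^ 2 + (2 * deg E v + 1) + (1 - 2 * deg E u) := by
      have : ∀ w, ((deg E' w : ℤ)) ^ 2 = (deg E w : ℤ) ^ 2 +
          (if w = v then (2 * (deg E w : ℤ) + 1) else 0) +
          (if w = u then (1 - 2 * (deg E w : ℤ)) else 0) := by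
        intro w
        rw [hdeg' w]
        by_cases c1 : w = v
        · simp only [c1, if_true]
          rw [if_neg huv.symm, if_neg huv.symm]; ring
        · by_cases c2 : w = u
          · simp only [c2, if_true]
            rw [if_neg huv, if_neg huv]; ring
          · simp [c1, c2]
      simp_rw [this]
      rw [sum_add_distrib, sum_add_distrib]
      simp
    have := hmin E' hE'F
    have h2 : ((deg E v : ℤ)) + 1 < deg E u := by exact_mod_cast hcon
    rw [hsum] at this
    linarith
  have hsumdeg : ∑ v, deg E v = d * n := by
    simp only [hdeg, card_filter]
    rw [sum_comm, sum_congr rfl (g := fun _ => r)]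
    · rw [sum_const, hEcard, smul_eq_mul, hm, Nat.div_mul_cancel hdvd]
    · intro e he
      rw [← card_filter, ← hr e he]
      congr 1; ext; simp
  refine ⟨E, mem_filter.2 ⟨mem_univ _, hr, fun u => ?_⟩⟩
  have hconst : ∑ _v : Fin n, d = d * n := by simp [mul_comm]
  change deg E u = d
  rcases lt_trichotomy (deg E u) d with h | h | h
  · have : ∑ v, deg E v < ∑ _v : Fin n, d :=
      sum_lt_sum (fun v _ => by have := hbal v u; omega) ⟨u, mem_univ _, h⟩
    omega
  · exact h
  · have : ∑ _v : Fin n, d < ∑ v, deg E v :=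
      sum_lt_sum (fun v _ => by have := hbal u v; omega) ⟨u, mem_univ _, h⟩
    omega

lemma edges_le_choose {n r d : ℕ} (hr : 2 ≤ r) (hn : r + (r - 1).factorial * d ≤ n) :
    d * n / r ≤ n.choose r := by
  obtain ⟨k, rfl⟩ : ∃ k, r = k + 1 := ⟨r - 1, by omega⟩
  obtain ⟨m, rfl⟩ : ∃ m, n = m + 1 := ⟨n - 1, by omega⟩
  simp only [Nat.add_sub_cancel] at hn
  have h1 : (m + 1 - k) ^ k ≤ k.factorial * m.choose k := by
    have := Nat.pow_le_choose (α := ℚ) k m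
    rw [div_le_iff₀' (by positivity)] at this
    exact_mod_cast this
  have h2 : k.factorial * d ≤ (m + 1 - k) ^ k :=
    le_trans (by omega) (Nat.le_self_pow (by omega) _)
  have h3 : d ≤ m.choose k :=
    Nat.le_of_mul_le_mul_left (h2.trans h1) k.factorial_pos
  have h4 := Nat.add_one_mul_choose_eq m k
  apply Nat.div_le_of_le_mul
  rw [mul_comm (k + 1), ← h4, mul_comm]
  gcongr

/-! ### Analytic estimates -/

/-- `J! ≤ e J (J/e)^J` for `J ≥ 1`, with the index shifted by one. -/
lemma factorial_le_exp (J : ℕ) :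
    ((J + 1).factorial : ℝ) ≤ Real.exp 1 * (J + 1) * ((J + 1) * Real.exp (-1)) ^ (J + 1) := by
  induction J with
  | zero => simp [← Real.exp_add]
  | succ J ih =>
    have hpos : (0 : ℝ) < (J : ℝ) + 1 := by positivity
    have key : Real.exp 1 * ((J : ℝ) + 1) ^ (J + 2) ≤ ((J : ℝ) + 2) ^ (J + 2) := by
      have h1 : 1 - (((J : ℝ) + 2) / (J + 1))⁻¹ ≤ Real.log (((J : ℝ) + 2) / (J + 1)) :=
        Real.one_sub_inv_le_log_of_pos (by positivity)
      have h2 : (1 : ℝ) ≤ (J + 2) * Real.log (((J : ℝ) + 2) / (J + 1)) := by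
        have : ((J : ℝ) + 2) * (1 - (((J : ℝ) + 2) / (J + 1))⁻¹) = 1 := by
          field_simp; ring
        refine this.symm.le.trans ?_
        gcongr
      have h3 : Real.exp 1 ≤ (((J : ℝ) + 2) / (J + 1)) ^ (J + 2) := by
        rw [← Real.exp_log (show (0 : ℝ) < (((J : ℝ) + 2) / (J + 1)) by positivity),
          ← Real.exp_nat_mul]
        apply Real.exp_le_exp.2
        push_cast
        exact h2
      rw [div_pow, le_div_iff₀ (by positivity)] at h3
      exact h3
    rw [Nat.factorial_succ]
    push_cast
    rw [mul_pow] at ih ⊢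
    have h5 : (0:ℝ) < Real.exp (-1) ^ (J + 1) := by positivity
    have e1 : Real.exp (-1) * Real.exp 1 = 1 := by rw [← Real.exp_add]; simp
    have h6 : ((J : ℝ) + 1 + 1) = J + 2 := by ring
    rw [h6]
    calc ((J : ℝ) + 2) * ((J + 1).factorial : ℝ)
        ≤ ((J : ℝ) + 2) * (Real.exp 1 * (J + 1) * ((J + 1) ^ (J + 1) * Real.exp (-1) ^ (J + 1))) := by
          gcongr
      _ = ((J : ℝ) + 2) * Real.exp (-1) ^ (J + 1) * (Real.exp 1 * (J + 1) ^ (J + 2)) := by ring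
      _ ≤ ((J : ℝ) + 2) * Real.exp (-1) ^ (J + 1) * ((J + 2) ^ (J + 2)) := by gcongr
      _ = ((J : ℝ) + 2) * Real.exp (-1) ^ (J + 1) * ((J + 2) ^ (J + 2)) *
            (Real.exp (-1) * Real.exp 1) := by rw [e1, mul_one]
      _ = _ := by ring

lemma choose_le_exp {n k : ℕ} (hk : 0 < k) {T : ℝ} (hT : 0 < T) (h : T * n ≤ k) :
    (n.choose k : ℝ) ≤ Real.exp (k * (1 - Real.log T)) := by
  have h1 : (n.choose k : ℝ) ≤ (n : ℝ) ^ k / k.factorial := Nat.choose_le_pow_div k n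
  have h2 : (k : ℝ) ^ k / k.factorial ≤ Real.exp k :=
    Real.pow_div_factorial_le_exp _ (by positivity) k
  have h3 : (n : ℝ) ≤ k / T := by rw [le_div_iff₀ hT]; linarith
  have e : Real.exp (k * (1 - Real.log T)) = Real.exp k / T ^ k := by
    rw [mul_sub, mul_one, Real.exp_sub, Real.exp_nat_mul, Real.exp_log hT]
  rw [e]
  calc (n.choose k : ℝ) ≤ (n : ℝ) ^ k / k.factorial := h1
    _ ≤ (k / T) ^ k / k.factorial := by gcongr
    _ = ((k : ℝ) ^ k / k.factorial) / T ^ k := by rw [div_pow]; ring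
    _ ≤ _ := by gcongr

lemma factorial_div_pow_le {M : ℝ} (hM : 1 ≤ M) :
    ((⌊M⌋₊).factorial : ℝ) ≤ M ^ ⌊M⌋₊ * (Real.exp 2 * M * Real.exp (-M)) := by
  obtain ⟨J, hJ⟩ : ∃ J, ⌊M⌋₊ = J + 1 :=
    ⟨⌊M⌋₊ - 1, by have := Nat.floor_pos.2 hM; omega⟩
  have h1 : ((J : ℝ) + 1) ≤ M := by
    have := Nat.floor_le (show 0 ≤ M by linarith); rw [hJ] at this; exact_mod_cast this
  have h2 : M < (J : ℝ) + 1 + 1 := by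
    have := Nat.lt_floor_add_one M; rw [hJ] at this; exact_mod_cast this
  rw [hJ]
  refine (factorial_le_exp J).trans ?_
  have h3 : Real.exp (-1) ^ (J + 1) ≤ Real.exp 1 * Real.exp (-M) := by
    rw [← Real.exp_nat_mul, ← Real.exp_add]
    apply Real.exp_le_exp.2
    push_cast; linarith
  have e2 : Real.exp 2 = Real.exp 1 * Real.exp 1 := by rw [← Real.exp_add]; norm_num
  rw [mul_pow, e2]
  calc Real.exp 1 * ((J : ℝ) + 1) * ((J + 1) ^ (J + 1) * Real.exp (-1) ^ (J + 1))
      ≤ Real.exp 1 * M * (M ^ (J + 1) * (Real.exp 1 * Real.exp (-M))) := by gcongr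
    _ = _ := by ring

/-- The level ratio in real form. The loss `δ` absorbs the edges meeting `S` (a fraction at most `a`)
and the incidences that are unusable or excluded (a fraction at most `b`). -/
lemma level_ratio {n r d : ℕ} (hr : 3 ≤ r) (hn : 0 < n) (hd : 0 < d) (hdvd : r ∣ d * n)
    (S : Finset (Fin n)) (j : ℕ) {a b δ : ℝ} (ha : (r : ℝ) * S.card ≤ a * n)
    (hb : (r : ℝ) * j + (r + 1) * (r ^ 3 * d ^ 2) ≤ b * (d * S.card)) (hb0 : 0 ≤ b) (hb1 : b ≤ 1)
    (hab : a + r * b ≤ δ) (hδ : δ ≤ 1) :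
    ((level n r d S j).card : ℝ) *
      ((1 - δ) * ((d : ℝ) / r * ((S.card : ℝ) / n) ^ (r - 1)) * S.card) ≤
    (level n r d S (j + 1)).card * ((j : ℝ) + 1) := by
  have hr0 : (0 : ℝ) < r := by positivity
  have hn0 : (0 : ℝ) < n := by positivity
  have hd0 : (0 : ℝ) < d := by positivity
  have h := level_switch (d := d) hr S j
  have hX : (d : ℝ) * n / r * (1 - a) ≤ ((d * n / r - d * S.card : ℕ) : ℝ) := by
    have h1 : ((d * n / r : ℕ) : ℝ) = (d : ℝ) * n / r := by
      rw [Nat.cast_div hdvd (by positivity)]; push_cast; rfl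
    have h2 : ((d * n / r : ℕ) : ℝ) - ((d * S.card : ℕ) : ℝ) ≤
        ((d * n / r - d * S.card : ℕ) : ℝ) := by
      rw [sub_le_iff_le_add]
      have : d * n / r ≤ (d * n / r - d * S.card) + d * S.card := by omega
      exact_mod_cast this
    refine le_trans ?_ h2
    rw [h1]
    push_cast
    have h3 : (d : ℝ) * S.card ≤ d * n / r * a := by
      rw [div_mul_eq_mul_div, le_div_iff₀ hr0]
      nlinarith
    linarith
  have hY : (1 - b) * ((d : ℝ) * S.card) ≤
      ((d * S.card - r * j - (r + 1) * (r ^ 3 * d ^ 2) : ℕ) : ℝ) := by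
    have h2 : ((d * S.card : ℕ) : ℝ) - ((r * j + (r + 1) * (r ^ 3 * d ^ 2) : ℕ) : ℝ) ≤
        ((d * S.card - r * j - (r + 1) * (r ^ 3 * d ^ 2) : ℕ) : ℝ) := by
      rw [sub_le_iff_le_add]
      have : d * S.card ≤ (d * S.card - r * j - (r + 1) * (r ^ 3 * d ^ 2)) +
        (r * j + (r + 1) * (r ^ 3 * d ^ 2)) := by omega
      exact_mod_cast this
    refine le_trans ?_ h2
    push_cast
    linarith
  set X := (d * n / r - d * S.card : ℕ) with hXdef
  set Y := (d * S.card - r * j - (r + 1) * (r ^ 3 * d ^ 2) : ℕ) with hYdef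
  have ha1 : a ≤ 1 := by nlinarith
  have hbern : 1 - δ ≤ (1 - a) * (1 - b) ^ r := by
    have h1 : 1 + (r : ℝ) * (-b) ≤ (1 + -b) ^ r := one_add_mul_le_pow (by linarith) r
    have h2 : 1 - (r : ℝ) * b ≤ (1 - b) ^ r := by
      rw [← sub_eq_add_neg] at h1; linarith
    have ha0 : 0 ≤ a := by
      by_contra hneg
      push Not at hneg
      have : (0 : ℝ) ≤ r * S.card := by positivity
      nlinarith
    have h3 : 0 ≤ a * (r * b) := by positivity
    nlinarith
  have hXY : (1 - δ) * ((d : ℝ) / r * ((S.card : ℝ) / n) ^ (r - 1) * S.card) * (d * n) ^ r ≤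
      X * (Y : ℝ) ^ r := by
    have e1 : ((d : ℝ) / r * ((S.card : ℝ) / n) ^ (r - 1) * S.card) * (d * n) ^ r =
        (d * n / r) * (d * S.card) ^ r := by
      obtain ⟨q, rfl⟩ : ∃ q, r = q + 1 := ⟨r - 1, by omega⟩
      simp only [Nat.add_sub_cancel, div_pow, mul_pow]
      field_simp
      ring
    calc _ = (1 - δ) * ((d * n / r) * (d * S.card) ^ r) := by rw [mul_assoc, e1]
      _ ≤ ((1 - a) * (1 - b) ^ r) * ((d * n / r) * (d * S.card) ^ r) := by gcongr
      _ = (d * n / r * (1 - a)) * ((1 - b) * (d * S.card)) ^ r := by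
        rw [mul_pow (1 - b)]; ring
      _ ≤ _ := by
        have h1b : 0 ≤ 1 - b := by linarith
        gcongr
  have hcast : ((level n r d S j).card : ℝ) * (X * r.factorial * (Y : ℝ) ^ r) ≤
      (level n r d S (j + 1)).card * ((j + 1) * r.factorial * (d * n) ^ r) := by
    exact_mod_cast h
  have hpos : (0 : ℝ) < r.factorial * (d * n) ^ r := by positivity
  refine le_of_mul_le_mul_right ?_ hpos
  calc _ = ((level n r d S j).card : ℝ) * r.factorial *
        ((1 - δ) * ((d : ℝ) / r * ((S.card : ℝ) / n) ^ (r - 1) * S.card) * (d * n) ^ r) := by ring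
    _ ≤ ((level n r d S j).card : ℝ) * r.factorial * (X * (Y : ℝ) ^ r) := by gcongr
    _ = ((level n r d S j).card : ℝ) * (X * r.factorial * (Y : ℝ) ^ r) := by ring
    _ ≤ _ := hcast
    _ = _ := by ring

lemma chain_bound (N : ℕ → ℝ) (M : ℝ) (hM : 0 ≤ M) (J : ℕ)
    (h : ∀ j < J, N j * M ≤ N (j + 1) * ((j : ℝ) + 1)) : N 0 * M ^ J ≤ N J * J.factorial := by
  induction J with
  | zero => simp
  | succ J ih =>
    have h1 := ih (fun j hj => h j (by omega))
    have h2 := h J (by omega)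
    rw [Nat.factorial_succ, pow_succ]
    push_cast
    calc N 0 * (M ^ J * M) = (N 0 * M ^ J) * M := by ring
      _ ≤ (N J * J.factorial) * M := by gcongr
      _ = (N J * M) * J.factorial := by ring
      _ ≤ (N (J + 1) * ((J : ℝ) + 1)) * J.factorial := by gcongr
      _ = _ := by ring

/-- Up to a polynomial factor, a set `S` of size between `Tn` and `2Tn` is independent with
probability at most `e^{-m|S|}`, where `m` is `(d/r) T^(r-1)` reduced by the factor `1 - δ`. -/
lemma level_zero_le {n r d : ℕ} (hr : 3 ≤ r) (hn : 0 < n) (hd : 0 < d) (hdvd : r ∣ d * n)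
    (S : Finset (Fin n)) {T δ y m : ℝ} (hT : 0 < T) (hδ0 : 0 < δ) (hδ : δ < 1)
    (hTδ : 6 * r * T ≤ δ) (hy : y = d / r * T ^ (r - 1)) (hm : m = (1 - δ) * y) (hm1 : 1 ≤ m)
    (hk1 : T * n ≤ S.card) (hk2 : (S.card : ℝ) ≤ 2 * T * n)
    (hC : ((r : ℝ) + 1) * (r ^ 3 * d ^ 2) ≤ T * (d * S.card)) :
    ((level n r d S 0).card : ℝ) ≤ (regularFamily n r d).card *
      (Real.exp 2 * (m * S.card) * Real.exp (-(m * S.card))) := by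
  have hr0 : (3 : ℝ) ≤ r := by exact_mod_cast hr
  have hn0 : (0 : ℝ) < n := by positivity
  have hd0 : (0 : ℝ) < d := by positivity
  have hk0 : (0 : ℝ) < S.card := lt_of_lt_of_le (by positivity) hk1
  have hk1' : (1 : ℝ) ≤ S.card := by exact_mod_cast (show 0 < S.card by exact_mod_cast hk0)
  have hT1 : T ≤ 1 := by nlinarith
  have hM1 : 1 ≤ m * S.card := by nlinarith
  set M := m * S.card with hM
  set J := ⌊M⌋₊ with hJ
  have hy0 : 0 ≤ y := by rw [hy]; positivity
  have hmy : m ≤ y := by rw [hm]; nlinarith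
  have hry : r * y ≤ d * T := by
    rw [hy]
    have : T ^ (r - 1) ≤ T := by
      calc T ^ (r - 1) ≤ T ^ 1 := pow_le_pow_of_le_one hT.le hT1 (by omega)
        _ = T := pow_one T
    calc (r : ℝ) * (d / r * T ^ (r - 1)) = d * T ^ (r - 1) := by field_simp
      _ ≤ d * T := by gcongr
  have hstep : ∀ j < J, ((level n r d S j).card : ℝ) * M ≤
      (level n r d S (j + 1)).card * ((j : ℝ) + 1) := by
    intro j hj
    have hjM : (j : ℝ) ≤ M := by
      have h1 : (J : ℝ) ≤ M := Nat.floor_le (by linarith)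
      have h2 : (j : ℝ) ≤ J := by exact_mod_cast hj.le
      linarith
    have hrj : (r : ℝ) * j ≤ T * (d * S.card) := by
      calc (r : ℝ) * j ≤ r * M := by gcongr
        _ = (r * m) * S.card := by rw [hM]; ring
        _ ≤ (r * y) * S.card := by gcongr
        _ ≤ (d * T) * S.card := by gcongr
        _ = _ := by ring
    have h := level_ratio (a := 2 * r * T) (b := 2 * T) (δ := δ) hr hn hd hdvd S j
      (by nlinarith) (by linarith) (by positivity) (by nlinarith) (by nlinarith) hδ.le
    refine le_trans ?_ h
    gcongr
    rw [hM, hm]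
    have hTk : T ≤ (S.card : ℝ) / n := by rw [le_div_iff₀ hn0]; exact hk1
    have h1δ : 0 ≤ 1 - δ := by linarith
    rw [hy]
    gcongr
  have hch := chain_bound (fun j => ((level n r d S j).card : ℝ)) M (by linarith) J hstep
  have hJle : ((level n r d S J).card : ℝ) ≤ (regularFamily n r d).card := by
    exact_mod_cast card_le_card (filter_subset _ _)
  have hfac := factorial_div_pow_le hM1
  rw [← hJ] at hfac
  have hMpos : 0 < M ^ J := by positivity
  refine le_of_mul_le_mul_right ?_ hMpos
  calc _ ≤ ((level n r d S J).card : ℝ) * J.factorial := hch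
    _ ≤ (regularFamily n r d).card * (M ^ J * (Real.exp 2 * M * Real.exp (-M))) := by gcongr
    _ = _ := by ring

/-! ### Union bound and limit -/

lemma exists_indepSet_card {n : ℕ} (E : Finset (Finset (Fin n))) {k : ℕ}
    (hne : ∀ e ∈ E, e.Nonempty) (hk : k ≤ independenceNumber E) :
    ∃ S : Finset (Fin n), S.card = k ∧ IndepSet E S := by
  have hmem : independenceNumber E ∈
      {s : ℕ | ∃ S : Finset (Fin n), S.card = s ∧ IndepSet E S} := by
    apply Nat.sSup_mem
    · refine ⟨0, ∅, rfl, fun e he h => ?_⟩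
      exact (hne e he).ne_empty (subset_empty.1 h)
    · refine ⟨n, ?_⟩
      rintro s ⟨S, rfl, -⟩
      simpa using card_le_univ S
  obtain ⟨S, hS, hind⟩ := hmem
  obtain ⟨S', hS', hc⟩ := exists_subset_card_eq (hk.trans_eq hS.symm)
  exact ⟨S', hc, fun e he h => hind e he (h.trans hS')⟩

lemma bad_card_le {n r d k : ℕ} (hr : 3 ≤ r) {x B : ℝ} (hx : ∀ i : ℕ, x < i → k ≤ i)
    (hB : ∀ S : Finset (Fin n), S.card = k → ((level n r d S 0).card : ℝ) ≤ B) :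
    (((regularFamily n r d).filter (fun E => ¬ (independenceNumber E : ℝ) ≤ x)).card : ℝ) ≤
      n.choose k * B := by
  have hsub : (regularFamily n r d).filter (fun E => ¬ (independenceNumber E : ℝ) ≤ x) ⊆
      (powersetCard k (univ : Finset (Fin n))).biUnion (fun S => level n r d S 0) := by
    intro E hE
    obtain ⟨hE, hbad⟩ := mem_filter.1 hE
    have hE' := hE
    simp only [regularFamily, mem_filter, mem_univ, true_and] at hE'
    obtain ⟨S, hS, hind⟩ := exists_indepSet_card E (k := k)
      (fun e he => card_pos.1 (by rw [hE'.1 e he]; omega)) (hx _ (not_le.1 hbad))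
    refine mem_biUnion.2 ⟨S, mem_powersetCard.2 ⟨subset_univ _, hS⟩, mem_filter.2 ⟨hE, ?_⟩⟩
    rw [card_eq_zero, filter_eq_empty_iff]
    exact hind
  calc _ ≤ (((powersetCard k (univ : Finset (Fin n))).biUnion
        (fun S => level n r d S 0)).card : ℝ) := by exact_mod_cast card_le_card hsub
    _ ≤ ∑ S ∈ powersetCard k (univ : Finset (Fin n)), ((level n r d S 0).card : ℝ) := by
        exact_mod_cast card_biUnion_le
    _ ≤ ∑ S ∈ powersetCard k (univ : Finset (Fin n)), B :=
        sum_le_sum (fun S hS => hB S (mem_powersetCard.1 hS).2)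
    _ = _ := by simp

/-- The union bound. The condition `2 - log T ≤ m` makes the exponential rate `m` beat the number
`e^{k(1 - log T)}` of candidate sets with `e^{-k}` to spare. -/
lemma prob_ge {n r d : ℕ} (hr : 3 ≤ r) (hn : 0 < n) (hd : 0 < d) (hdvd : r ∣ d * n)
    (hne : (regularFamily n r d).Nonempty)
    {T δ m : ℝ} (hT : 0 < T) (hδ0 : 0 < δ) (hδ : δ < 1)
    (hTδ : 6 * r * T ≤ δ) (hm : m = (1 - δ) * (d / r * T ^ (r - 1)))
    (hlog : 2 - Real.log T ≤ m)
    (hn1 : 1 ≤ T * n) (hn2 : ((r : ℝ) + 1) * (r ^ 3 * d ^ 2) ≤ T * (d * (T * n))) :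
    1 - Real.exp 2 * m * (((⌊T * n⌋₊ + 1 : ℕ) : ℝ) * Real.exp (-((⌊T * n⌋₊ + 1 : ℕ) : ℝ))) ≤
      uniformProb (regularFamily n r d) (fun E => (independenceNumber E : ℝ) ≤ T * n) := by
  set k := ⌊T * n⌋₊ + 1 with hk
  have hr0 : (3 : ℝ) ≤ r := by exact_mod_cast hr
  have hTn : 0 ≤ T * n := by positivity
  have hk1 : T * n ≤ k := by rw [hk]; push_cast; exact (Nat.lt_floor_add_one _).le
  have hk2 : (k : ℝ) ≤ 2 * T * n := by
    rw [hk]; push_cast; have := Nat.floor_le hTn; linarith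
  have hT1 : T ≤ 1 := by nlinarith
  have hm1 : 1 ≤ m := by have := Real.log_nonpos hT.le hT1; linarith
  set F := regularFamily n r d with hF
  have hFpos : (0 : ℝ) < F.card := by exact_mod_cast card_pos.2 hne
  have hbad := bad_card_le (n := n) (r := r) (d := d) (k := k) hr (x := T * n)
    (B := F.card * (Real.exp 2 * (m * k) * Real.exp (-(m * k))))
    (fun i hi => by rw [hk]; exact Nat.succ_le_of_lt ((Nat.floor_lt hTn).2 hi))
    (fun S hS => by
      have h := level_zero_le hr hn hd hdvd S hT hδ0 hδ hTδ rfl hm hm1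
        (by rw [hS]; exact hk1) (by rw [hS]; exact hk2)
        (by rw [hS]; refine hn2.trans ?_; gcongr)
      rwa [hS] at h)
  have hchoose := choose_le_exp (n := n) (k := k) (by omega) hT hk1
  have hbad2 : ((F.filter (fun E => ¬ (independenceNumber E : ℝ) ≤ T * n)).card : ℝ) ≤
      F.card * (Real.exp 2 * m * (k * Real.exp (-(k : ℝ)))) := by
    refine hbad.trans ?_
    have hexp : Real.exp (k * (1 - Real.log T)) * Real.exp (-(m * k)) ≤ Real.exp (-(k : ℝ)) := by
      rw [← Real.exp_add]
      apply Real.exp_le_exp.2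
      have : (0 : ℝ) ≤ k := by positivity
      nlinarith
    calc (n.choose k : ℝ) * (F.card * (Real.exp 2 * (m * k) * Real.exp (-(m * k))))
        ≤ Real.exp (k * (1 - Real.log T)) *
          (F.card * (Real.exp 2 * (m * k) * Real.exp (-(m * k)))) := by gcongr
      _ = F.card * (Real.exp 2 * m * (k *
          (Real.exp (k * (1 - Real.log T)) * Real.exp (-(m * k))))) := by ring
      _ ≤ _ := by gcongr
  have hsplit := card_filter_add_card_filter_not (s := F)
    (fun E => (independenceNumber E : ℝ) ≤ T * n)
  have hsplit' : ((F.filter (fun E => (independenceNumber E : ℝ) ≤ T * n)).card : ℝ) +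
      (F.filter (fun E => ¬ (independenceNumber E : ℝ) ≤ T * n)).card = F.card := by
    exact_mod_cast hsplit
  rw [uniformProb, le_div_iff₀ hFpos]
  linarith

lemma uniformProb_le_one {α : Type*} (F : Finset α) (P : α → Prop) : uniformProb F P ≤ 1 := by
  rw [uniformProb]
  apply div_le_one_of_le₀
  · exact_mod_cast card_le_card (filter_subset _ _)
  · positivity

lemma tendsto_prob {r d : ℕ} (hr : 3 ≤ r) (hd : 0 < d)
    {T δ m : ℝ} (hT : 0 < T) (hδ0 : 0 < δ) (hδ : δ < 1)
    (hTδ : 6 * r * T ≤ δ) (hm : m = (1 - δ) * (d / r * T ^ (r - 1)))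
    (hlog : 2 - Real.log T ≤ m) :
    Tendsto (fun n : ℕ => uniformProb (regularFamily n r d)
      (fun E => (independenceNumber E : ℝ) ≤ T * n))
      (atTop ⊓ 𝓟 {n : ℕ | r ∣ d * n}) (nhds 1) := by
  have hd0 : (0 : ℝ) < d := by positivity
  have hTn : Tendsto (fun n : ℕ => T * (n : ℝ)) atTop atTop :=
    tendsto_natCast_atTop_atTop.const_mul_atTop hT
  have hk : Tendsto (fun n : ℕ => ((⌊T * (n : ℝ)⌋₊ + 1 : ℕ) : ℝ)) atTop atTop := by
    refine tendsto_atTop_mono (fun n => ?_) hTn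
    push_cast; exact (Nat.lt_floor_add_one _).le
  have hxe : Tendsto (fun x : ℝ => x * Real.exp (-x)) atTop (nhds 0) := by
    simpa using Real.tendsto_pow_mul_exp_neg_atTop_nhds_zero 1
  have hlow : Tendsto (fun n : ℕ => 1 - Real.exp 2 * m *
      (((⌊T * n⌋₊ + 1 : ℕ) : ℝ) * Real.exp (-((⌊T * n⌋₊ + 1 : ℕ) : ℝ)))) atTop (nhds 1) := by
    simpa using ((hxe.comp hk).const_mul (Real.exp 2 * m)).const_sub 1
  refine tendsto_of_tendsto_of_tendsto_of_le_of_le' (hlow.mono_left inf_le_left)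
    tendsto_const_nhds ?_ (Eventually.of_forall fun n => uniformProb_le_one _ _)
  have hdvd : ∀ᶠ n in atTop ⊓ 𝓟 {n : ℕ | r ∣ d * n}, r ∣ d * n :=
    mem_inf_of_right (mem_principal_self _)
  have hev : ∀ᶠ n : ℕ in atTop, 1 ≤ T * (n : ℝ) ∧
      ((r : ℝ) + 1) * (r ^ 3 * d ^ 2) / (T * d) ≤ T * n ∧ r + (r - 1).factorial * d ≤ n :=
    (hTn.eventually_ge_atTop _).and ((hTn.eventually_ge_atTop _).and (eventually_ge_atTop _))
  filter_upwards [hdvd, hev.filter_mono inf_le_left] with n hn ⟨h1, h2, h3⟩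
  refine prob_ge hr (by omega) hd hn
    (regularFamily_nonempty_s10 hn (edges_le_choose (by omega) h3)) hT hδ0 hδ hTδ hm hlog h1 ?_
  rw [div_le_iff₀ (by positivity)] at h2
  linarith

lemma density_pow {r : ℕ} (hr : 3 ≤ r) {ε z : ℝ} (hz : 0 ≤ z) :
    ((1 + ε) * z ^ ((1 : ℝ) / ((r : ℝ) - 1))) ^ (r - 1) = (1 + ε) ^ (r - 1) * z := by
  have h1 : ((r : ℝ) - 1) = ((r - 1 : ℕ) : ℝ) := by
    rw [Nat.cast_sub (by omega)]; simp
  rw [mul_pow, h1, one_div, Real.rpow_inv_natCast_pow hz (by omega)]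

lemma tendsto_density {r : ℕ} (hr : 3 ≤ r) (ε : ℝ) :
    Tendsto (fun d : ℕ => (1 + ε) *
      ((r * Real.log d / (((r : ℝ) - 1) * d)) ^ ((1 : ℝ) / ((r : ℝ) - 1)))) atTop (nhds 0) := by
  have hr0 : (3 : ℝ) ≤ r := by exact_mod_cast hr
  have h1 : Tendsto (fun x : ℝ => Real.log x / x) atTop (nhds 0) :=
    Real.isLittleO_log_id_atTop.tendsto_div_nhds_zero
  have h2 : Tendsto (fun d : ℕ => (r : ℝ) * Real.log d / (((r : ℝ) - 1) * d)) atTop (nhds 0) := by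
    have := ((h1.comp tendsto_natCast_atTop_atTop).const_mul ((r : ℝ) / (r - 1)))
    rw [mul_zero] at this
    refine this.congr (fun d => ?_)
    simp only [Function.comp]
    rw [div_mul_div_comm]
  have hp : (0 : ℝ) < 1 / ((r : ℝ) - 1) := by
    apply one_div_pos.2; linarith
  have h3 := (h2.rpow_const (p := (1 : ℝ) / ((r : ℝ) - 1)) (Or.inr hp.le)).const_mul (1 + ε)
  rwa [Real.zero_rpow hp.ne', mul_zero] at h3

/-- For every integer `r ≥ 3` and every `ε > 0` there exists `d₀ = d₀(r, ε)` such that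
for every fixed integer `d ≥ d₀`, w.h.p.
`α(H_r(n,d)) ≤ (1+ε)·(r log d/((r−1)d))^(1/(r−1))·n`. -/
theorem independence_number_of_random_regular_hypergraph_upper
    (r : ℕ) (hr : 3 ≤ r) (ε : ℝ) (hε : 0 < ε) :
    ∃ d₀ : ℕ, ∀ d : ℕ, d₀ ≤ d →
      Filter.Tendsto
        (fun n : ℕ =>
          uniformProb (regularFamily n r d)
            (fun E =>
              (independenceNumber E : ℝ) ≤
                (1 + ε) * ((r * Real.log d / (((r : ℝ) - 1) * d)) ^ ((1 : ℝ) / ((r : ℝ) - 1))) * n))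
        (Filter.atTop ⊓ Filter.principal {n : ℕ | r ∣ d * n}) (nhds 1) := by
  have hr0 : (3 : ℝ) ≤ r := by exact_mod_cast hr
  -- This `δ` leaves the factor `1 + ε / 2` after the loss `1 - δ` in the exponent.
  set δ := ε / (2 * (1 + ε)) with hδ
  have hδ0 : 0 < δ := by positivity
  have hδ1 : δ < 1 := by rw [hδ, div_lt_one (by positivity)]; linarith
  have hδε : (1 - δ) * (1 + ε) = 1 + ε / 2 := by rw [hδ]; field_simp; ring
  have hlogt : Tendsto (fun d : ℕ => Real.log d) atTop atTop :=
    Real.tendsto_log_atTop.comp tendsto_natCast_atTop_atTop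
  have hev : ∀ᶠ d : ℕ in atTop,
      (1 + ε) * ((r * Real.log d / (((r : ℝ) - 1) * d)) ^ ((1 : ℝ) / ((r : ℝ) - 1))) ≤
        δ / (6 * r) ∧ 1 ≤ Real.log d ∧ 4 * ((r : ℝ) - 1) / ε ≤ Real.log d ∧ 0 < d :=
    ((tendsto_density hr ε).eventually_le_const (by positivity)).and
      ((hlogt.eventually_ge_atTop _).and
        ((hlogt.eventually_ge_atTop _).and (eventually_gt_atTop 0)))
  obtain ⟨d₀, hd₀⟩ := eventually_atTop.1 hev
  refine ⟨d₀, fun d hd => ?_⟩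
  obtain ⟨hTδ, hL1, hL2, hdpos⟩ := hd₀ d hd
  have hd0 : (0 : ℝ) < d := by positivity
  have hr1 : (0 : ℝ) < (r : ℝ) - 1 := by linarith
  set L := Real.log d with hL
  set z := (r : ℝ) * L / (((r : ℝ) - 1) * d) with hz
  have hz0 : 0 < z := by positivity
  set T := (1 + ε) * z ^ ((1 : ℝ) / ((r : ℝ) - 1)) with hT
  have hT0 : 0 < T := by positivity
  refine tendsto_prob (T := T) (δ := δ) hr hdpos hT0 hδ0 hδ1 ?_ rfl ?_
  · rw [le_div_iff₀ (by positivity)] at hTδ; linarith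
  · have hlogT : -(L / ((r : ℝ) - 1)) ≤ Real.log T := by
      have hzlow : 1 / (d : ℝ) ≤ z := by
        rw [hz, div_le_div_iff₀ hd0 (by positivity), one_mul]
        have : (r : ℝ) - 1 ≤ r * L := by nlinarith
        gcongr
      have h1 : -L ≤ Real.log z := by
        have := Real.log_le_log (by positivity) hzlow
        rwa [one_div, Real.log_inv] at this
      rw [hT, Real.log_mul (by positivity) (by positivity), Real.log_rpow hz0]
      have h2 : 0 ≤ Real.log (1 + ε) := Real.log_nonneg (by linarith)
      have h3 : 1 / ((r : ℝ) - 1) * (-L) ≤ 1 / ((r : ℝ) - 1) * Real.log z := by gcongr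
      have h4 : 1 / ((r : ℝ) - 1) * (-L) = -(L / ((r : ℝ) - 1)) := by ring
      linarith
    have hy : (d : ℝ) / r * T ^ (r - 1) = (1 + ε) ^ (r - 1) * (L / ((r : ℝ) - 1)) := by
      rw [hT, density_pow hr hz0.le, hz]
      field_simp
    have hpow : 1 + ε ≤ (1 + ε) ^ (r - 1) := le_self_pow₀ (by linarith) (by omega)
    have hLr : 0 ≤ L / ((r : ℝ) - 1) := by positivity
    have hm : (1 + ε / 2) * (L / ((r : ℝ) - 1)) ≤ (1 - δ) * ((d : ℝ) / r * T ^ (r - 1)) := by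
      rw [hy, ← hδε, mul_assoc]
      have : 0 ≤ 1 - δ := by linarith
      gcongr
    have h2 : 2 ≤ ε / 2 * (L / ((r : ℝ) - 1)) := by
      rw [div_le_iff₀ hε] at hL2
      rw [← mul_div_assoc, le_div_iff₀ hr1]
      linarith
    linarith
end
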